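/- arXiv:2308.09384 — 6 statements merged into one kernel-verified Lean document; each statement's English description precedes it below -/
import Mathlib

section
/- Let R be an integral domain with trivial Jacobson radical, let X = Specm(R) be its set of maximal ideals, and for r ∈ R let X_r = {m ∈ X : r ∉ m}. Then (a) the collection F = {Z ⊆ X : X_r ⊆ Z for some r ∈ R \ {0}} is a filter on X, and (b) for any ultrafilter U on X containing F, the canonical ring homomorphism R → ∏_U R/m (sending r to the class of (r mod m)_{m∈X}) is injective, so the ultraproduct ∏_U R/m contains the fraction field of R. -/
/-- Given a filter `F` on an index set `X` and a family of commutative rings `S j`, the ideal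
`I_F` of the product ring `∏ j, S j` consisting of the families whose zero set belongs to
`F`.  The ultraproduct `∏_F S j` is the quotient of `∏ j, S j` by this ideal. -/
def ultraIdeal {X : Type*} (F : Filter X) (S : X → Type*) [∀ j, CommRing (S j)] :
    Ideal (∀ j, S j) where
  carrier := {s | {j | s j = 0} ∈ F}
  add_mem' := by
    intro a b ha hb
    refine Filter.mem_of_superset (Filter.inter_mem ha hb) ?_
    intro j hj
    have h1 : a j = 0 := hj.1
    have h2 : b j = 0 := hj.2
    simp [Set.mem_setOf_eq, h1, h2]
  zero_mem' := by
    have : {j | (0 : ∀ j, S j) j = 0} = Set.univ := by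
      ext j; simp
    rw [Set.mem_setOf_eq, this]
    exact Filter.univ_mem
  smul_mem' := by
    intro c a ha
    refine Filter.mem_of_superset ha ?_
    intro j hj
    have h1 : a j = 0 := hj
    simp [Set.mem_setOf_eq, h1]

/-- The collection `F = {Z ⊆ Specm(R) : X_r ⊆ Z for some r ∈ R \ {0}}`, where
`X_r = {m : r ∉ m}`. -/
def specmCofilter (R : Type*) [CommRing R] : Set (Set (MaximalSpectrum R)) :=
  {Z | ∃ r : R, r ≠ 0 ∧ {m : MaximalSpectrum R | r ∉ m.asIdeal} ⊆ Z}

/-- Let `R` be an integral domain with trivial Jacobson radical, let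
`X = Specm(R)` and for `r ∈ R` let `X_r = {m ∈ X : r ∉ m}`.  Then (a) the collection
`F = {Z ⊆ X : X_r ⊆ Z for some r ≠ 0}` is a filter on `X` (it does not contain `∅` and is
closed under intersections and supersets), and (b) for every ultrafilter `U` on `X`
containing `F`, the canonical ring homomorphism `R → ∏_U R/m` is injective, so the
ultraproduct `∏_U R/m` contains the fraction field of `R`. -/
theorem specm_ultraproduct_contains_fraction_field (R : Type*) [CommRing R] [IsDomain R]
    (hJ : (⊥ : Ideal R).jacobson = ⊥) :
    (∅ ∉ specmCofilter R)
    ∧ (∀ Z₁ Z₂, Z₁ ∈ specmCofilter R → Z₂ ∈ specmCofilter R → Z₁ ∩ Z₂ ∈ specmCofilter R)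
    ∧ (∀ Z₁ Z₂, Z₁ ∈ specmCofilter R → Z₁ ⊆ Z₂ → Z₂ ∈ specmCofilter R)
    ∧ (∀ U : Ultrafilter (MaximalSpectrum R), (∀ Z ∈ specmCofilter R, Z ∈ U) →
        (Function.Injective (fun r : R =>
          Ideal.Quotient.mk (ultraIdeal (U : Filter (MaximalSpectrum R))
              (fun m : MaximalSpectrum R => R ⧸ m.asIdeal))
            (fun m : MaximalSpectrum R => Ideal.Quotient.mk m.asIdeal r))
        ∧ ∃ emb : FractionRing R →+*
            ((∀ m : MaximalSpectrum R, R ⧸ m.asIdeal) ⧸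
              ultraIdeal (U : Filter (MaximalSpectrum R))
                (fun m : MaximalSpectrum R => R ⧸ m.asIdeal)),
          Function.Injective emb ∧
          ∀ r : R, emb (algebraMap R (FractionRing R) r) =
            Ideal.Quotient.mk (ultraIdeal (U : Filter (MaximalSpectrum R))
                (fun m : MaximalSpectrum R => R ⧸ m.asIdeal))
              (fun m : MaximalSpectrum R => Ideal.Quotient.mk m.asIdeal r))) := by
  have hne : ∀ r : R, r ≠ 0 → ∃ m : MaximalSpectrum R, r ∉ m.asIdeal := by
    intro r hr
    by_contra! h
    apply hr
    have : r ∈ (⊥ : Ideal R).jacobson := by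
      rw [Ideal.jacobson, Ideal.mem_sInf]
      rintro J ⟨_, hJm⟩
      exact h ⟨J, hJm⟩
    rw [hJ] at this
    simpa using this
  have hempty : ∅ ∉ specmCofilter R := by
    rintro ⟨r, hr, h⟩
    obtain ⟨m, hm⟩ := hne r hr
    exact h hm
  refine ⟨hempty, ?_, ?_, ?_⟩
  · rintro Z₁ Z₂ ⟨r, hr, h1⟩ ⟨s, hs, h2⟩
    refine ⟨r * s, mul_ne_zero hr hs, fun m hm => ⟨h1 fun h => hm ?_, h2 fun h => hm ?_⟩⟩
    · exact m.asIdeal.mul_mem_right _ h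
    · exact m.asIdeal.mul_mem_left _ h
  · rintro Z₁ Z₂ ⟨r, hr, h1⟩ h
    exact ⟨r, hr, h1.trans h⟩
  · intro U hU
    let I := ultraIdeal (U : Filter (MaximalSpectrum R))
      (fun m : MaximalSpectrum R => R ⧸ m.asIdeal)
    let f : R →+* ((∀ m : MaximalSpectrum R, R ⧸ m.asIdeal) ⧸ I) :=
      (Ideal.Quotient.mk I).comp (RingHom.pi fun m => Ideal.Quotient.mk m.asIdeal)
    have hX : ∀ r : R, r ≠ 0 → {m : MaximalSpectrum R | r ∉ m.asIdeal} ∈ U :=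
      fun r hr => hU _ ⟨r, hr, subset_rfl⟩
    have hf : Function.Injective f := by
      rw [injective_iff_map_eq_zero]
      intro r h0
      by_contra hr
      have h1 : {m : MaximalSpectrum R | Ideal.Quotient.mk m.asIdeal r = 0} ∈
          (U : Filter (MaximalSpectrum R)) := Ideal.Quotient.eq_zero_iff_mem.mp h0
      obtain ⟨m, hm, hm'⟩ := U.neBot.nonempty_of_mem (Filter.inter_mem h1 (hX r hr))
      exact hm' (Ideal.Quotient.eq_zero_iff_mem.mp hm)
    have hunit : ∀ y : nonZeroDivisors R, IsUnit (f y) := by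
      rintro ⟨r, hr⟩
      have hr0 : r ≠ 0 := nonZeroDivisors.ne_zero hr
      have hinv : ∀ m : MaximalSpectrum R, ∃ s : R ⧸ m.asIdeal,
          r ∉ m.asIdeal → Ideal.Quotient.mk m.asIdeal r * s = 1 := by
        intro m
        by_cases h : r ∈ m.asIdeal
        · exact ⟨0, fun h' => absurd h h'⟩
        · have := m.isMaximal
          obtain ⟨s, hs⟩ := Ideal.Quotient.exists_inv (I := m.asIdeal)
            (a := Ideal.Quotient.mk m.asIdeal r)
            (fun h0 => h (Ideal.Quotient.eq_zero_iff_mem.mp h0))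
          exact ⟨s, fun _ => hs⟩
      choose s hs using hinv
      have hmem : (RingHom.pi (fun m : MaximalSpectrum R => Ideal.Quotient.mk m.asIdeal)) r * s
          - 1 ∈ I := by
        refine Filter.mem_of_superset (hX r hr0) ?_
        intro m hm
        change Ideal.Quotient.mk m.asIdeal r * s m - 1 = 0
        rw [hs m hm, sub_self]
      have hmul : f r * Ideal.Quotient.mk I s = 1 := by
        have h := Ideal.Quotient.eq.mpr hmem
        rw [map_mul, map_one] at h
        exact h
      exact IsUnit.of_mul_eq_one _ hmul
    refine ⟨hf, IsLocalization.lift (M := nonZeroDivisors R) hunit, ?_, ?_⟩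
    · have : Nontrivial ((∀ m : MaximalSpectrum R, R ⧸ m.asIdeal) ⧸ I) := hf.nontrivial
      exact RingHom.injective _
    · intro r
      exact IsLocalization.lift_eq hunit r
end

section
/- Let R be a commutative ring of prime characteristic p and A = A_n(R) the n-th Weyl algebra over R. Then the center of A is equal to the subalgebra C = R[x_1^p, …, x_n^p, ∂_1^p, …, ∂_n^p]. -/
/-- The commutation relations defining the `n`-th Weyl algebra over `R`:
`[x_i, x_j] = 0`, `[∂_i, ∂_j] = 0`, `[∂_i, x_j] = δ_{ij}`.  Generators are indexed by
`Fin n ⊕ Fin n`, with `.inl i` corresponding to `x_i` and `.inr i` to `∂_i`. -/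
inductive WeylRel (R : Type*) [CommRing R] (n : ℕ) :
    FreeAlgebra R (Fin n ⊕ Fin n) → FreeAlgebra R (Fin n ⊕ Fin n) → Prop
  | xx (i j : Fin n) : WeylRel R n
      (FreeAlgebra.ι R (.inl i) * FreeAlgebra.ι R (.inl j))
      (FreeAlgebra.ι R (.inl j) * FreeAlgebra.ι R (.inl i))
  | dd (i j : Fin n) : WeylRel R n
      (FreeAlgebra.ι R (.inr i) * FreeAlgebra.ι R (.inr j))
      (FreeAlgebra.ι R (.inr j) * FreeAlgebra.ι R (.inr i))
  | dx (i j : Fin n) : WeylRel R n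
      (FreeAlgebra.ι R (.inr i) * FreeAlgebra.ι R (.inl j))
      (FreeAlgebra.ι R (.inl j) * FreeAlgebra.ι R (.inr i) + if i = j then 1 else 0)

/-- The `n`-th Weyl algebra `A_n(R)` over a commutative ring `R`, as the quotient of the
free `R`-algebra on `x_1, …, x_n, ∂_1, …, ∂_n` by the Weyl relations. -/
abbrev WeylAlgebra (R : Type*) [CommRing R] (n : ℕ) : Type _ := RingQuot (WeylRel R n)

/-- The generator `x_i` of the Weyl algebra. -/
noncomputable def wX (R : Type*) [CommRing R] {n : ℕ} (i : Fin n) : WeylAlgebra R n :=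
  RingQuot.mkAlgHom R (WeylRel R n) (FreeAlgebra.ι R (.inl i))

/-- The generator `∂_i` of the Weyl algebra. -/
noncomputable def wD (R : Type*) [CommRing R] {n : ℕ} (i : Fin n) : WeylAlgebra R n :=
  RingQuot.mkAlgHom R (WeylRel R n) (FreeAlgebra.ι R (.inr i))

/-- The set `{x_1^p, …, x_n^p, ∂_1^p, …, ∂_n^p}` of `p`-th powers of the generators, so that
`Algebra.adjoin R (pPowSet R n p)` is the subalgebra `C = R[x_1^p, …, x_n^p, ∂_1^p, …, ∂_n^p]`. -/
def pPowSet (R : Type*) [CommRing R] (n p : ℕ) : Set (WeylAlgebra R n) :=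
  (Set.range fun i : Fin n => wX R i ^ p) ∪ (Set.range fun i : Fin n => wD R i ^ p)

namespace WeylProof

open MvPolynomial

variable {R : Type*} [CommRing R] {n : ℕ}

theorem wX_comm (i j : Fin n) : wX R i * wX R j = wX R j * wX R i := by
  have := RingQuot.mkAlgHom_rel R (WeylRel.xx (R := R) i j)
  simpa [wX] using this

theorem wD_comm (i j : Fin n) : wD R i * wD R j = wD R j * wD R i := by
  have := RingQuot.mkAlgHom_rel R (WeylRel.dd (R := R) i j)
  simpa [wD] using this

theorem wD_wX (i j : Fin n) :
    wD R i * wX R j = wX R j * wD R i + if i = j then 1 else 0 := by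
  have := RingQuot.mkAlgHom_rel R (WeylRel.dx (R := R) i j)
  rw [map_add, map_mul, map_mul] at this
  rw [wX, wD, this]
  split_ifs <;> simp

theorem induct {P : WeylAlgebra R n → Prop} (hC : ∀ r : R, P (algebraMap R _ r))
    (hX : ∀ i, P (wX R i)) (hD : ∀ i, P (wD R i))
    (hm : ∀ a b, P a → P b → P (a * b)) (ha : ∀ a b, P a → P b → P (a + b))
    (a : WeylAlgebra R n) : P a := by
  obtain ⟨f, rfl⟩ := RingQuot.mkAlgHom_surjective R (WeylRel R n) a
  induction f using FreeAlgebra.induction with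
  | grade0 r => simpa using hC r
  | grade1 x =>
    rcases x with i | i
    · exact hX i
    · exact hD i
  | mul a b h1 h2 => rw [map_mul]; exact hm _ _ h1 h2
  | add a b h1 h2 => rw [map_add]; exact ha _ _ h1 h2

abbrev Pol (R : Type*) [CommRing R] (n : ℕ) := MvPolynomial (Fin n ⊕ Fin n) R

/-- the action of generators on polynomials -/
noncomputable def act (R : Type*) [CommRing R] (n : ℕ) :
    Fin n ⊕ Fin n → Module.End R (Pol R n) :=
  Sum.elim (fun i => LinearMap.mulLeft R (X (.inl i)))
    (fun i => LinearMap.mulLeft R (X (.inr i)) + (pderiv (.inl i)).toLinearMap)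

theorem pderiv_comm' (i j : Fin n ⊕ Fin n) (f : Pol R n) :
    pderiv i (pderiv j f) = pderiv j (pderiv i f) := by
  have h : ⁅(pderiv i : Derivation R (Pol R n) (Pol R n)),
      (pderiv j : Derivation R (Pol R n) (Pol R n))⁆ = 0 := by
    apply MvPolynomial.derivation_ext
    intro k
    rw [Derivation.commutator_apply]
    simp only [pderiv_X, Pi.single_apply]
    split_ifs <;> simp
  have h2 := congrArg (fun d => d f) h
  simp only [Derivation.commutator_apply] at h2
  exact sub_eq_zero.mp h2

noncomputable def Phi (R : Type*) [CommRing R] (n : ℕ) :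
    WeylAlgebra R n →ₐ[R] Module.End R (Pol R n) :=
  RingQuot.liftAlgHom R ⟨FreeAlgebra.lift R (act R n), by
    intro a b h
    cases h with
    | xx i j =>
      apply LinearMap.ext
      intro f
      simp [act]
      ring
    | dd i j =>
      apply LinearMap.ext
      intro f
      simp [act, pderiv_X, pderiv_comm' (.inl i) (.inl j), Derivation.leibniz]
      ring
    | dx i j =>
      apply LinearMap.ext
      intro f
      by_cases hij : i = j
      · subst hij
        simp [act, pderiv_X, Derivation.leibniz]
        ring
      · have : j ≠ i := fun h => hij h.symm
        simp [act, pderiv_X, Derivation.leibniz, hij, Pi.single_apply, this]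
        ring⟩

theorem Phi_X (i : Fin n) (f : Pol R n) : Phi R n (wX R i) f = X (.inl i) * f := by
  simp [Phi, wX, act]

theorem Phi_D (i : Fin n) (f : Pol R n) :
    Phi R n (wD R i) f = X (.inr i) * f + pderiv (.inl i) f := by
  simp [Phi, wD, act]

theorem Phi_Y (a : WeylAlgebra R n) (i : Fin n) : ∀ f : Pol R n,
    Phi R n a (X (.inr i) * f) = X (.inr i) * Phi R n a f := by
  induction a using induct with
  | hC r => intro f; simp [Module.algebraMap_end_apply]
  | hX j => intro f; simp only [Phi_X]; ring
  | hD j =>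
    intro f
    simp [Phi_D, Derivation.leibniz, pderiv_X]
    ring
  | hm a b h1 h2 => intro f; simp [h1, h2]
  | ha a b h1 h2 => intro f; simp [h1, h2, mul_add]

theorem Phi_comm (a : WeylAlgebra R n) (i : Fin n) : ∀ f : Pol R n,
    Phi R n a (X (.inl i) * f) - X (.inl i) * Phi R n a f =
      pderiv (.inr i) (Phi R n a f) - Phi R n a (pderiv (.inr i) f) := by
  induction a using induct with
  | hC r => intro f; simp [Module.algebraMap_end_apply]
  | hX j =>
    intro f
    simp [Phi_X, Derivation.leibniz, pderiv_X]
    ring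
  | hD j =>
    intro f
    simp [Phi_D, Derivation.leibniz, pderiv_X, pderiv_comm' (.inr i) (.inl j)]
    by_cases h : i = j
    · subst h; simp; ring
    · have : j ≠ i := fun h' => h h'.symm
      simp [Pi.single_apply, h, this]; ring
  | hm a b h1 h2 =>
    intro f
    have e1 := h1 (Phi R n b f)
    have e2 := congrArg (Phi R n a) (h2 f)
    simp only [map_sub] at e2
    simp only [map_mul, Module.End.mul_apply]
    linear_combination e1 + e2
  | ha a b h1 h2 =>
    intro f
    simp only [map_add, LinearMap.add_apply]
    linear_combination h1 f + h2 f

theorem mon_pairwise (g : Fin n → WeylAlgebra R n) (hg : ∀ i j, Commute (g i) (g j)) :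
    Pairwise fun i j => ∀ (x y : Multiplicative ℕ),
        Commute (((powersHom (WeylAlgebra R n)) (g i)) x)
          (((powersHom (WeylAlgebra R n)) (g j)) y) := by
  intro i j _ a b
  simpa [powersHom_apply] using (hg i j).pow_pow _ _

/-- ordered monomials in commuting elements -/
noncomputable def mon (g : Fin n → WeylAlgebra R n) (hg : ∀ i j, Commute (g i) (g j)) :
    (Fin n → Multiplicative ℕ) →* WeylAlgebra R n :=
  MonoidHom.noncommPiCoprod (fun i => powersHom _ (g i))
    (mon_pairwise g hg)

theorem mon_single (g : Fin n → WeylAlgebra R n) (hg) (i : Fin n) (k : ℕ) :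
    mon g hg (Pi.mulSingle i (Multiplicative.ofAdd k)) = g i ^ k := by
  simp [mon, MonoidHom.noncommPiCoprod_mulSingle]

theorem mon_mem (g : Fin n → WeylAlgebra R n) (hg) (S : Submonoid (WeylAlgebra R n))
    (a : Fin n → Multiplicative ℕ) (h : ∀ i, g i ^ (a i).toAdd ∈ S) : mon g hg a ∈ S := by
  rw [mon, MonoidHom.noncommPiCoprod_apply]
  apply Submonoid.noncommProd_mem
  intro i _
  simpa [powersHom_apply] using h i

noncomputable def mX (m : Fin n ⊕ Fin n →₀ ℕ) : WeylAlgebra R n :=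
  mon (wX R) wX_comm (fun i => Multiplicative.ofAdd (m (.inl i)))

noncomputable def mD (m : Fin n ⊕ Fin n →₀ ℕ) : WeylAlgebra R n :=
  mon (wD R) wD_comm (fun i => Multiplicative.ofAdd (m (.inr i)))

theorem mX_add_inl (m : Fin n ⊕ Fin n →₀ ℕ) (i : Fin n) :
    mX (R := R) (Finsupp.single (.inl i) 1 + m) = wX R i * mX m := by
  have := mon_single (wX R) wX_comm i 1
  rw [pow_one] at this
  rw [mX, mX, ← this, ← map_mul]
  congr 1
  ext j
  by_cases h : i = j
  · subst h; simp
  · have : j ≠ i := fun h' => h h'.symm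
    simp [Finsupp.single_apply, h, Pi.mulSingle_apply, this]

theorem mX_add_inr (m : Fin n ⊕ Fin n →₀ ℕ) (i : Fin n) :
    mX (R := R) (Finsupp.single (.inr i) 1 + m) = mX m := by
  simp [mX]

theorem mD_add_inl (m : Fin n ⊕ Fin n →₀ ℕ) (i : Fin n) :
    mD (R := R) (Finsupp.single (.inl i) 1 + m) = mD m := by
  simp [mD]

theorem mD_add_inr (m : Fin n ⊕ Fin n →₀ ℕ) (i : Fin n) :
    mD (R := R) (Finsupp.single (.inr i) 1 + m) = wD R i * mD m := by
  have := mon_single (wD R) wD_comm i 1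
  rw [pow_one] at this
  rw [mD, mD, ← this, ← map_mul]
  congr 1
  ext j
  by_cases h : i = j
  · subst h; simp
  · have : j ≠ i := fun h' => h h'.symm
    simp [Finsupp.single_apply, h, Pi.mulSingle_apply, this]

noncomputable def nu (R : Type*) [CommRing R] (n : ℕ) : Pol R n →ₗ[R] WeylAlgebra R n :=
  (basisMonomials (Fin n ⊕ Fin n) R).constr R (fun m => mX m * mD m)

theorem nu_mon (m : Fin n ⊕ Fin n →₀ ℕ) :
    nu R n (monomial m 1) = mX m * mD m := by
  have := (basisMonomials (Fin n ⊕ Fin n) R).constr_basis R (fun m => mX (R := R) m * mD m) m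
  simpa [nu] using this

theorem X_mul_mon (i : Fin n ⊕ Fin n) (m : Fin n ⊕ Fin n →₀ ℕ) :
    (X i * monomial m 1 : Pol R n) = monomial (Finsupp.single i 1 + m) 1 := by
  simp [X, monomial_mul]

theorem nu_X (i : Fin n) (f : Pol R n) : nu R n (X (.inl i) * f) = wX R i * nu R n f := by
  have : nu R n ∘ₗ LinearMap.mulLeft R (X (.inl i)) = LinearMap.mulLeft R (wX R i) ∘ₗ nu R n := by
    apply (basisMonomials (Fin n ⊕ Fin n) R).ext
    intro m
    simp only [coe_basisMonomials, LinearMap.comp_apply, LinearMap.mulLeft_apply, X_mul_mon,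
      nu_mon, mX_add_inl, mD_add_inl, mul_assoc]
  exact congrArg (fun l => l f) this

theorem nu_D_base (i : Fin n) (m : Fin n ⊕ Fin n →₀ ℕ) (h : ∀ j, m (.inl j) = 0) :
    nu R n (X (.inr i) * monomial m 1 + pderiv (.inl i) (monomial m 1)) =
      wD R i * nu R n (monomial m 1) := by
  have h1 : mX (R := R) m = 1 := by
    have : (fun i => Multiplicative.ofAdd (m (.inl i))) = (1 : Fin n → Multiplicative ℕ) := by
      ext i; simp [h]
    rw [mX, this, map_one]
  rw [X_mul_mon, map_add, nu_mon, nu_mon, mD_add_inr, mX_add_inr, pderiv_monomial, h1, h i]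
  simp

theorem nu_D_mon (i : Fin n) : ∀ (k : ℕ) (m : Fin n ⊕ Fin n →₀ ℕ), m.degree = k →
    nu R n (X (.inr i) * monomial m 1 + pderiv (.inl i) (monomial m 1)) =
      wD R i * nu R n (monomial m 1) := by
  intro k
  induction k with
  | zero =>
    intro m hm
    rw [Finsupp.degree_eq_zero_iff] at hm
    subst hm
    exact nu_D_base i 0 (by simp)
  | succ k ih =>
    intro m hm
    by_cases h : ∃ j, m (.inl j) ≠ 0
    · obtain ⟨j, hj⟩ := h
      obtain ⟨m', rfl⟩ : ∃ m', m = Finsupp.single (.inl j) 1 + m' :=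
        ⟨m - Finsupp.single (.inl j) 1, by
          rw [add_tsub_cancel_of_le]
          simpa [Finsupp.single_le_iff] using Nat.one_le_iff_ne_zero.mpr hj⟩
      have e := ih m' (by simp [map_add] at hm; omega)
      rw [← X_mul_mon, nu_X, ← mul_assoc (wD R i), wD_wX, add_mul, mul_assoc, ← e, ← nu_X, Derivation.leibniz]
      by_cases h : i = j
      · subst h
        simp only [if_true, one_mul, ← map_add]
        congr 1
        simp
        ring
      · have : j ≠ i := fun h' => h h'.symm
        simp only [h, if_false, zero_mul, add_zero]
        congr 1
        simp [pderiv_X, Pi.single_apply, this]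
        ring
    · push Not at h
      exact nu_D_base i m h

theorem nu_D (i : Fin n) (f : Pol R n) :
    nu R n (X (.inr i) * f + pderiv (.inl i) f) = wD R i * nu R n f := by
  have : nu R n ∘ₗ (LinearMap.mulLeft R (X (.inr i)) + (pderiv (.inl i)).toLinearMap)
      = LinearMap.mulLeft R (wD R i) ∘ₗ nu R n := by
    apply (basisMonomials (Fin n ⊕ Fin n) R).ext
    intro m
    exact nu_D_mon i _ m rfl
  exact congrArg (fun l => l f) this

theorem nu_Phi (a : WeylAlgebra R n) : ∀ f, nu R n (Phi R n a f) = a * nu R n f := by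
  induction a using induct with
  | hC r =>
    intro f
    rw [AlgHom.commutes, Module.algebraMap_end_apply, map_smul, Algebra.smul_def]
  | hX j => intro f; rw [Phi_X, nu_X]
  | hD j => intro f; rw [Phi_D, nu_D]
  | hm a b h1 h2 => intro f; simp [h1, h2, mul_assoc]
  | ha a b h1 h2 => intro f; simp [h1, h2, add_mul]

theorem nu_one : nu R n 1 = 1 := by
  have := nu_mon (R := R) (n := n) 0
  have e : (fun _ => Multiplicative.ofAdd 0 : Fin n → Multiplicative ℕ) = 1 := rfl
  rw [mX, mD] at this
  simp only [Finsupp.coe_zero, Pi.zero_apply, e, map_one, mul_one] at this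
  exact this

theorem nu_sigma (a : WeylAlgebra R n) : nu R n (Phi R n a 1) = a := by
  rw [nu_Phi, nu_one, mul_one]

theorem pderiv_zero_of_center (a : WeylAlgebra R n) (ha : ∀ b, b * a = a * b)
    (k : Fin n ⊕ Fin n) : pderiv k (Phi R n a 1) = 0 := by
  rcases k with i | i
  · have h := congrArg (fun b => Phi R n b 1) (ha (wD R i))
    simp only [map_mul, Module.End.mul_apply, Phi_D, map_add, Phi_Y] at h
    simpa using h
  · have h := congrArg (fun b => Phi R n b 1) (ha (wX R i))
    simp only [map_mul, Module.End.mul_apply, Phi_X] at h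
    have h2 := Phi_comm a i 1
    rw [← h] at h2
    simpa using h2.symm

theorem dvd_of_pderiv {p : ℕ} (hp : p.Prime) [CharP R p] (f : Pol R n)
    (hf : ∀ k, pderiv k f = 0) (m : Fin n ⊕ Fin n →₀ ℕ) (hm : coeff m f ≠ 0)
    (k : Fin n ⊕ Fin n) : p ∣ m k := by
  by_contra hd
  have h0 : m k ≠ 0 := fun h => hd (by simp [h])
  apply hm
  obtain ⟨m', rfl⟩ : ∃ m', m = m' + Finsupp.single k 1 :=
    ⟨m - Finsupp.single k 1, by
      rw [tsub_add_cancel_of_le]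
      simpa [Finsupp.single_le_iff] using Nat.one_le_iff_ne_zero.mpr h0⟩
  have h := congrArg (coeff m') (hf k)
  rw [coeff_pderiv, coeff_zero] at h
  have hu : IsUnit ((m' k + 1 : ℕ) : R) := by
    exact (CharP.isUnit_natCast_iff hp).mpr (by simpa using hd)
  simp at hu
  exact (hu.mul_left_eq_zero).mp h

theorem pow_comm (i j : Fin n) (k : ℕ) :
    wD R i * wX R j ^ k = wX R j ^ k * wD R i + if i = j then (k : WeylAlgebra R n) * wX R j ^ (k-1) else 0 := by
  induction k with
  | zero => simp
  | succ k ih =>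
    rw [pow_succ', ← mul_assoc, wD_wX, add_mul, mul_assoc, ih]
    split_ifs with h
    · rcases k with _ | k
      · simp
      · have := Nat.cast_commute (k+1) (wX R j)
        simp only [Nat.add_sub_cancel, mul_add, ← mul_assoc]
        rw [← this.eq, mul_assoc ((k+1 : ℕ) : WeylAlgebra R n), ← pow_succ' (wX R j) k,
          ← pow_succ']
        push_cast
        simp only [add_mul, one_mul]
        abel
    · simp [mul_assoc]

theorem pow_comm' (i j : Fin n) (k : ℕ) :
    wD R i ^ k * wX R j = wX R j * wD R i ^ k + if i = j then (k : WeylAlgebra R n) * wD R i ^ (k-1) else 0 := by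
  induction k with
  | zero => simp
  | succ k ih =>
    rw [pow_succ, mul_assoc, wD_wX, mul_add, ← mul_assoc, ih]
    split_ifs with h
    · rcases k with _ | k
      · simp
      · simp only [Nat.add_sub_cancel, add_mul, mul_assoc, ← pow_succ]
        push_cast
        noncomm_ring
    · simp [mul_assoc]

theorem central_of_gens (a : WeylAlgebra R n) (hX : ∀ i, wX R i * a = a * wX R i)
    (hD : ∀ i, wD R i * a = a * wD R i) (b : WeylAlgebra R n) : b * a = a * b := by
  induction b using induct with
  | hC r => exact Algebra.commutes r a
  | hX i => exact hX i
  | hD i => exact hD i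
  | hm b c h1 h2 => rw [mul_assoc, h2, ← mul_assoc, h1, mul_assoc]
  | ha b c h1 h2 => rw [add_mul, mul_add, h1, h2]

end WeylProof

/-- If `R` is a commutative ring of prime characteristic `p`, then the center
of the `n`-th Weyl algebra `A_n(R)` equals `C = R[x_1^p, …, x_n^p, ∂_1^p, …, ∂_n^p]`. -/
theorem weylAlgebra_center_eq_adjoin_pPows (R : Type*) [CommRing R] (n p : ℕ)
    (hp : p.Prime) [CharP R p] :
    Subalgebra.center R (WeylAlgebra R n) = Algebra.adjoin R (pPowSet R n p) := by
  have hp0 : (p : WeylAlgebra R n) = 0 := by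
    rw [← map_natCast (algebraMap R (WeylAlgebra R n)), CharP.cast_eq_zero, map_zero]
  apply le_antisymm
  · intro a ha
    rw [Subalgebra.mem_center_iff] at ha
    have hd := WeylProof.dvd_of_pderiv hp _ (WeylProof.pderiv_zero_of_center a ha)
    rw [← WeylProof.nu_sigma a]
    generalize WeylProof.Phi R n a 1 = f at hd
    rw [f.as_sum, map_sum]
    refine Subalgebra.sum_mem _ fun m hm => ?_
    have hd := hd m (MvPolynomial.mem_support_iff.mp hm)
    rw [← mul_one (MvPolynomial.coeff m f), ← smul_eq_mul, ← MvPolynomial.smul_monomial, map_smul,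
      WeylProof.nu_mon]
    refine Subalgebra.smul_mem _ (Subalgebra.mul_mem _ ?_ ?_) _
    · refine WeylProof.mon_mem _ _ (Algebra.adjoin R (pPowSet R n p)).toSubmonoid _ fun i => ?_
      obtain ⟨k, hk⟩ := hd (.inl i)
      simp only [toAdd_ofAdd, hk, pow_mul]
      have hi : wX R i ^ p ∈ Algebra.adjoin R (pPowSet R n p) :=
        Algebra.subset_adjoin (Or.inl ⟨i, rfl⟩)
      exact Subalgebra.pow_mem _ hi _
    · refine WeylProof.mon_mem _ _ (Algebra.adjoin R (pPowSet R n p)).toSubmonoid _ fun i => ?_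
      obtain ⟨k, hk⟩ := hd (.inr i)
      simp only [toAdd_ofAdd, hk, pow_mul]
      have hi : wD R i ^ p ∈ Algebra.adjoin R (pPowSet R n p) :=
        Algebra.subset_adjoin (Or.inr ⟨i, rfl⟩)
      exact Subalgebra.pow_mem _ hi _
  · apply Algebra.adjoin_le
    rintro _ (⟨i, rfl⟩ | ⟨i, rfl⟩)
    · refine Subalgebra.mem_center_iff.mpr (WeylProof.central_of_gens _ (fun j => ?_) fun j => ?_)
      · exact (Commute.pow_right (WeylProof.wX_comm j i) p).eq
      · simp [WeylProof.pow_comm, hp0]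
    · refine Subalgebra.mem_center_iff.mpr (WeylProof.central_of_gens _ (fun j => ?_) fun j => ?_)
      · simp [WeylProof.pow_comm', hp0]
      · exact (Commute.pow_right (WeylProof.wD_comm j i) p).eq
end

section
/- Let R be a commutative ring of prime characteristic p, A = A_n(R) the n-th Weyl algebra over R, and C = R[x_1^p, …, x_n^p, ∂_1^p, …, ∂_n^p] its center. Then the natural map φ: A ⊗_C A^{op} → End_C(A) of C-algebras, given by φ(a ⊗ b)(x) = a x b, is an isomorphism; that is, A is an Azumaya algebra over C. -/
/-- The center of an algebra acts on the algebra by multiplication, making the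
algebra an algebra over its center. -/
noncomputable instance centerAlgebra (R A : Type*) [CommRing R] [Ring A] [Algebra R A] :
    Algebra (Subalgebra.center R A) A :=
  RingHom.toAlgebra' (Subalgebra.center R A).subtype
    (fun c x => (Subalgebra.mem_center_iff.mp c.2 x).symm)

section AzumayaCriterion
open TensorProduct MulOpposite

variable {C A : Type*} [CommRing C] [Ring A] [Algebra C A]

/-- The elements of the enveloping algebra on which the two actions of `A` agree. -/
def casimirSet (C A : Type*) [CommRing C] [Ring A] [Algebra C A] : Set (A ⊗[C] Aᵐᵒᵖ) :=
  {u | ∀ a : A, (a ⊗ₜ[C] (1 : Aᵐᵒᵖ)) * u = ((1 : A) ⊗ₜ[C] op a) * u}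

theorem casimir_mul {u : A ⊗[C] Aᵐᵒᵖ} (hu : u ∈ casimirSet C A) (t : A ⊗[C] Aᵐᵒᵖ) :
    t * u = (AlgHom.mulLeftRight C A t 1 ⊗ₜ[C] (1 : Aᵐᵒᵖ)) * u := by
  induction t using TensorProduct.induction_on with
  | zero => simp
  | add s t hs ht => rw [add_mul, hs, ht, map_add, LinearMap.add_apply, add_tmul, add_mul]
  | tmul a b =>
    have h1 : a ⊗ₜ[C] b = (a ⊗ₜ[C] (1 : Aᵐᵒᵖ)) * ((1 : A) ⊗ₜ[C] op b.unop) := by simp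
    rw [h1, mul_assoc, ← hu b.unop, ← mul_assoc]
    simp

theorem casimir_central {u : A ⊗[C] Aᵐᵒᵖ} (hu : u ∈ casimirSet C A) (x a : A) :
    a * AlgHom.mulLeftRight C A u x = AlgHom.mulLeftRight C A u x * a := by
  have h := congrArg (fun t => AlgHom.mulLeftRight C A t x) (hu a)
  simpa [map_mul] using h

theorem casimir_injective (h1 : (1 : A ⊗[C] Aᵐᵒᵖ) ∈ Ideal.span (casimirSet C A)) :
    Function.Injective (AlgHom.mulLeftRight C A) := by
  rw [injective_iff_map_eq_zero]
  have key : ∀ s ∈ Ideal.span (casimirSet C A), ∀ t : A ⊗[C] Aᵐᵒᵖ,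
      AlgHom.mulLeftRight C A t = 0 → t * s = 0 := by
    intro s hs
    induction hs using Submodule.span_induction with
    | mem u hu => intro t ht; rw [casimir_mul hu, ht]; simp
    | zero => simp
    | add x y _ _ hx hy => intro t ht; rw [mul_add, hx t ht, hy t ht, add_zero]
    | smul e x _ hx =>
      intro t ht
      rw [smul_eq_mul, ← mul_assoc]
      exact hx _ (by rw [map_mul, ht, zero_mul])
  intro t ht
  simpa using key 1 h1 t ht

theorem casimir_surjective
    (hc : ∀ a : A, (∀ b : A, b * a = a * b) → ∃ c : C, algebraMap C A c = a)
    (h1 : (1 : A ⊗[C] Aᵐᵒᵖ) ∈ Ideal.span (casimirSet C A)) :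
    Function.Surjective (AlgHom.mulLeftRight C A) := by
  have key : ∀ s ∈ Ideal.span (casimirSet C A), ∀ g : Module.End C A,
      ∃ t, AlgHom.mulLeftRight C A t = g * AlgHom.mulLeftRight C A s := by
    intro s hs
    induction hs using Submodule.span_induction with
    | mem u hu =>
      intro g
      refine ⟨(g 1 ⊗ₜ[C] (1 : Aᵐᵒᵖ)) * u, ?_⟩
      ext x
      obtain ⟨c, hcx⟩ := hc _ (fun b => casimir_central hu x b)
      have h2 : g (algebraMap C A c) = g 1 * algebraMap C A c := by
        rw [Algebra.algebraMap_eq_smul_one, map_smul, mul_smul_comm, mul_one]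
      simp [map_mul, ← hcx, h2]
    | zero => intro g; exact ⟨0, by simp⟩
    | add x y _ _ hx hy =>
      intro g
      obtain ⟨a, ha⟩ := hx g
      obtain ⟨b, hb⟩ := hy g
      exact ⟨a + b, by rw [map_add, map_add, mul_add, ha, hb]⟩
    | smul e x _ hx =>
      intro g
      obtain ⟨a, ha⟩ := hx (g * AlgHom.mulLeftRight C A e)
      exact ⟨a, by rw [ha, smul_eq_mul, map_mul, mul_assoc]⟩
  intro g
  obtain ⟨t, ht⟩ := key 1 h1 g
  exact ⟨t, by simpa using ht⟩

theorem casimir_span_mul_right {s : A ⊗[C] Aᵐᵒᵖ} (hs : s ∈ Ideal.span (casimirSet C A))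
    (f : A ⊗[C] Aᵐᵒᵖ) : s * f ∈ Ideal.span (casimirSet C A) := by
  induction hs using Submodule.span_induction with
  | mem u hu =>
    refine Ideal.subset_span fun a => ?_
    rw [← mul_assoc, hu a, mul_assoc]
  | zero => simp
  | add x y _ _ hx hy => rw [add_mul]; exact add_mem hx hy
  | smul e x _ hx => rw [smul_eq_mul, mul_assoc]; exact Ideal.mul_mem_left _ _ hx

end AzumayaCriterion

section Descent
variable {E : Type*} [Ring E]

theorem weyl_comm_pow {Z V : E} (h : Z * V - V * Z = 1) (m : ℕ) :
    Z * V ^ (m + 1) - V ^ (m + 1) * Z = ((m + 1 : ℕ) : E) * V ^ m := by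
  induction m with
  | zero => simpa using h
  | succ m ih =>
    have e : Z * V ^ (m + 1 + 1) - V ^ (m + 1 + 1) * Z =
        (Z * V ^ (m + 1) - V ^ (m + 1) * Z) * V + V ^ (m + 1) * (Z * V - V * Z) := by
      rw [pow_succ V (m + 1)]; noncomm_ring
    rw [e, ih, h]
    push_cast
    rw [mul_assoc, ← pow_succ]
    noncomm_ring

theorem weyl_descend {p : ℕ} (hp : p.Prime) (hpE : (p : E) = 0) (J : Ideal E)
    (hJ : ∀ s ∈ J, ∀ f, s * f ∈ J) {Z V w : E} (h : Z * V - V * Z = 1) (hw : Z * w = w * Z)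
    (m : ℕ) (hm : m < p) (hmem : V ^ m * w ∈ J) : w ∈ J := by
  induction m with
  | zero => simpa using hmem
  | succ m ih =>
    apply ih (by omega)
    have h1 : Z * (V ^ (m + 1) * w) - V ^ (m + 1) * w * Z ∈ J :=
      sub_mem (J.mul_mem_left _ hmem) (hJ _ hmem _)
    have h2 : Z * (V ^ (m + 1) * w) - V ^ (m + 1) * w * Z =
        ((m + 1 : ℕ) : E) * (V ^ m * w) := by
      rw [← mul_assoc, ← mul_assoc, ← weyl_comm_pow h, sub_mul, mul_assoc _ w Z, ← hw,
        mul_assoc _ Z w]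
    rw [h2] at h1
    have hcop : IsCoprime ((m + 1 : ℕ) : ℤ) (p : ℤ) := by
      rw [Nat.isCoprime_iff_coprime]
      exact ((hp.coprime_iff_not_dvd).mpr (fun hd => absurd (Nat.le_of_dvd (by omega) hd) (by omega))).symm
    obtain ⟨a, b, hab⟩ := hcop
    have h3 : (a : E) * ((m + 1 : ℕ) : E) = 1 := by
      have := congrArg (Int.cast : ℤ → E) hab
      simpa [hpE] using this
    have h4 := J.mul_mem_left (a : E) h1
    rwa [← mul_assoc, h3, one_mul] at h4

theorem weyl_descend_list {p : ℕ} (hp : p.Prime) (hpE : (p : E) = 0) (J : Ideal E)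
    (hJ : ∀ s ∈ J, ∀ f, s * f ∈ J) {ι : Type*} (Z V : ι → E)
    (h : ∀ k, Z k * V k - V k * Z k = 1) (hne : ∀ k l, k ≠ l → Z k * V l = V l * Z k)
    (l : List ι) (hl : l.Nodup) (hmem : (l.map fun k => V k ^ (p - 1)).prod ∈ J) :
    (1 : E) ∈ J := by
  induction l with
  | nil => simpa using hmem
  | cons a l ih =>
    rw [List.nodup_cons] at hl
    apply ih hl.2
    rw [List.map_cons, List.prod_cons] at hmem
    refine weyl_descend hp hpE J hJ (h a) ?_ (p - 1) (by have := hp.pos; omega) hmem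
    apply Commute.list_prod_right
    intro y hy
    obtain ⟨b, hb, rfl⟩ := List.mem_map.mp hy
    exact Commute.pow_right (hne a b (fun e => hl.1 (e ▸ hb))) _

theorem weyl_prod_ann {p : ℕ} (hp : p.Prime) {ι : Type*} (V : ι → E)
    (hV : ∀ k l, V k * V l = V l * V k) (hVp : ∀ k, V k ^ p = 0)
    (l : List ι) (k : ι) (hk : k ∈ l) : V k * (l.map fun k => V k ^ (p - 1)).prod = 0 := by
  induction l with
  | nil => simp at hk
  | cons a l ih =>
    rw [List.map_cons, List.prod_cons]
    rcases List.mem_cons.mp hk with rfl | hk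
    · rw [← mul_assoc, ← pow_succ', Nat.sub_add_cancel hp.pos, hVp, zero_mul]
    · rw [← mul_assoc, (Commute.pow_right (hV k a) _ : Commute _ _).eq, mul_assoc, ih hk, mul_zero]

end Descent

section Main
open TensorProduct MulOpposite

theorem azumaya_of_weyl_gens {C A ι : Type*} [CommRing C] [Ring A] [Algebra C A] [Fintype ι]
    {p : ℕ} (hp : p.Prime) (hpA : (p : A) = 0)
    (hc : ∀ a : A, (∀ b : A, b * a = a * b) → ∃ c : C, algebraMap C A c = a)
    (v z : ι → A) (hgen : Algebra.adjoin C (Set.range v) = ⊤)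
    (hvp : ∀ k, ∃ c : C, algebraMap C A c = v k ^ p)
    (hvv : ∀ k l, ∃ c : C, v k * v l - v l * v k = algebraMap C A c)
    (hz : ∀ k, z k * v k - v k * z k = 1)
    (hzne : ∀ k l, k ≠ l → z k * v l = v l * z k) :
    Function.Bijective (AlgHom.mulLeftRight C A) := by
  classical
  have hpE : ((p : ℕ) : A ⊗[C] Aᵐᵒᵖ) = 0 := by
    have := congrArg (fun a : A => a ⊗ₜ[C] (1 : Aᵐᵒᵖ)) hpA
    have h2 : ((p : A) ⊗ₜ[C] (1 : Aᵐᵒᵖ)) = ((p : ℕ) : A ⊗[C] Aᵐᵒᵖ) :=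
      map_natCast (Algebra.TensorProduct.includeLeft : A →ₐ[C] A ⊗[C] Aᵐᵒᵖ) p
    rw [← h2, hpA, zero_tmul]
  have hswap : ∀ c : C, (algebraMap C A c) ⊗ₜ[C] (1 : Aᵐᵒᵖ)
      = (1 : A) ⊗ₜ[C] op (algebraMap C A c) := by
    intro c
    rw [Algebra.algebraMap_eq_smul_one, op_smul, op_one, tmul_smul, smul_tmul']
  set V : ι → A ⊗[C] Aᵐᵒᵖ := fun k => v k ⊗ₜ[C] (1 : Aᵐᵒᵖ) - (1 : A) ⊗ₜ[C] op (v k) with hVdef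
  set Z : ι → A ⊗[C] Aᵐᵒᵖ := fun k => z k ⊗ₜ[C] (1 : Aᵐᵒᵖ) with hZdef
  have hVV : ∀ k l, V k * V l = V l * V k := by
    intro k l
    obtain ⟨c, hcc⟩ := hvv k l
    have h1 : (v k * v l) ⊗ₜ[C] (1 : Aᵐᵒᵖ) - (v l * v k) ⊗ₜ[C] (1 : Aᵐᵒᵖ)
        = (1 : A) ⊗ₜ[C] op (v k * v l) - (1 : A) ⊗ₜ[C] op (v l * v k) := by
      rw [← sub_tmul, ← tmul_sub, ← op_sub, hcc, hswap]
    rw [← sub_eq_zero] at h1 ⊢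
    rw [← h1]
    simp only [hVdef, sub_mul, mul_sub, Algebra.TensorProduct.tmul_mul_tmul, one_mul, mul_one,
      op_mul]
    abel
  have hVp : ∀ k, V k ^ p = 0 := by
    intro k
    obtain ⟨c, hcc⟩ := hvp k
    have hcom : Commute (V k) ((1 : A) ⊗ₜ[C] op (v k)) := by
      change _ * _ = _ * _
      simp [hVdef, sub_mul, mul_sub]
    have h1 := hcom.add_pow_prime_eq hp
    have h2 : V k + (1 : A) ⊗ₜ[C] op (v k) = v k ⊗ₜ[C] (1 : Aᵐᵒᵖ) := by simp [hVdef]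
    rw [h2, hpE] at h1
    simp only [Algebra.TensorProduct.tmul_pow, one_pow, ← op_pow, ← hcc, hswap, zero_mul,
      add_zero] at h1
    simpa using h1
  have hzV : ∀ k, Z k * V k - V k * Z k = 1 := by
    intro k
    have := congrArg (fun a : A => a ⊗ₜ[C] (1 : Aᵐᵒᵖ)) (hz k)
    simp only [sub_tmul] at this
    rw [Algebra.TensorProduct.one_def, ← this]
    simp [hVdef, hZdef, sub_mul, mul_sub]
  have hzVne : ∀ k l, k ≠ l → Z k * V l = V l * Z k := by
    intro k l hkl
    simp [hVdef, hZdef, sub_mul, mul_sub, hzne k l hkl]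
  have h1 : (1 : A ⊗[C] Aᵐᵒᵖ) ∈ Ideal.span (casimirSet C A) := by
    refine weyl_descend_list hp hpE _ (fun s hs f => casimir_span_mul_right hs f) Z V hzV hzVne
      Finset.univ.toList (Finset.nodup_toList _) (Ideal.subset_span ?_)
    intro a
    have ha : a ∈ Algebra.adjoin C (Set.range v) := by rw [hgen]; trivial
    induction ha using Algebra.adjoin_induction with
    | mem x hx =>
      obtain ⟨k, rfl⟩ := hx
      rw [← sub_eq_zero, ← sub_mul]
      exact weyl_prod_ann hp V hVV hVp _ k (by simp)
    | algebraMap c => rw [hswap]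
    | add x y _ _ hx hy => rw [add_tmul, op_add, tmul_add, add_mul, add_mul, hx, hy]
    | mul x y _ _ hx hy =>
      have e1 : (x * y) ⊗ₜ[C] (1 : Aᵐᵒᵖ) = (x ⊗ₜ[C] (1 : Aᵐᵒᵖ)) * (y ⊗ₜ[C] (1 : Aᵐᵒᵖ)) := by simp
      have e2 : (1 : A) ⊗ₜ[C] op (x * y) = ((1 : A) ⊗ₜ[C] op y) * ((1 : A) ⊗ₜ[C] op x) := by simp
      have e3 : (x ⊗ₜ[C] (1 : Aᵐᵒᵖ)) * ((1 : A) ⊗ₜ[C] op y)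
        = ((1 : A) ⊗ₜ[C] op y) * (x ⊗ₜ[C] (1 : Aᵐᵒᵖ)) := by simp
      rw [e1, e2, mul_assoc, hy, ← mul_assoc, e3, mul_assoc, hx, mul_assoc]
  exact ⟨casimir_injective h1, casimir_surjective hc h1⟩

end Main

theorem weyl_aux_sub {A : Type*} [Ring A] {x d : A} (h : d * x = x * d + 1) :
    x * d - d * x = -1 := by
  rw [h]; abel

theorem weyl_aux_neg {A : Type*} [Ring A] {x d : A} (h : d * x = x * d + 1) :
    -x * d - d * -x = 1 := by
  rw [neg_mul, mul_neg, h]; abel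

theorem weyl_aux_neg_comm {A : Type*} [Ring A] {x d : A} (h : x * d = d * x) :
    -x * d = d * -x := by
  rw [neg_mul, mul_neg, h]

open TensorProduct MulOpposite in
set_option synthInstance.maxHeartbeats 1000000 in
set_option maxHeartbeats 1000000 in
/-- Let `R` be a commutative ring of prime characteristic `p`, `A = A_n(R)`
the `n`-th Weyl algebra and `C = R[x_1^p, …, x_n^p, ∂_1^p, …, ∂_n^p]` its center.  Then the
natural map of `C`-algebras `A ⊗_C A^op → End_C(A)`, `a ⊗ b ↦ (x ↦ a x b)`, is an
isomorphism; that is, `A` is an Azumaya algebra over `C`. -/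
theorem weylAlgebra_isAzumaya_over_center (R : Type*) [CommRing R] (n p : ℕ)
    (hp : p.Prime) [CharP R p]
    (hC : Subalgebra.center R (WeylAlgebra R n) = Algebra.adjoin R (pPowSet R n p)) :
    ∃ g : (@TensorProduct (Subalgebra.center R (WeylAlgebra R n)) _
          (WeylAlgebra R n) (WeylAlgebra R n)ᵐᵒᵖ _ _ Algebra.toModule Algebra.toModule)
        →ₐ[Subalgebra.center R (WeylAlgebra R n)]
          Module.End (Subalgebra.center R (WeylAlgebra R n)) (WeylAlgebra R n),
      (∀ a b x : WeylAlgebra R n, g (a ⊗ₜ op b) x = a * x * b) ∧ Function.Bijective g := by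
  have hxx : ∀ i j : Fin n, wX R i * wX R j = wX R j * wX R i := by
    intro i j
    simpa [wX] using RingQuot.mkAlgHom_rel R (WeylRel.xx (R := R) i j)
  have hdd : ∀ i j : Fin n, wD R i * wD R j = wD R j * wD R i := by
    intro i j
    simpa [wD] using RingQuot.mkAlgHom_rel R (WeylRel.dd (R := R) i j)
  have hdx : ∀ i j : Fin n, wD R i * wX R j = wX R j * wD R i + if i = j then 1 else 0 := by
    intro i j
    have := RingQuot.mkAlgHom_rel R (WeylRel.dx (R := R) i j)
    rw [map_mul, map_add, map_mul] at this
    rw [wD, wX, this]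
    split_ifs <;> simp
  have hcen : ∀ a ∈ pPowSet R n p, a ∈ Subalgebra.center R (WeylAlgebra R n) := by
    intro a ha
    rw [hC]
    exact Algebra.subset_adjoin ha
  have hpA : ((p : ℕ) : WeylAlgebra R n) = 0 := by
    rw [← map_natCast (algebraMap R (WeylAlgebra R n)) p, CharP.cast_eq_zero, map_zero]
  have hgen : Algebra.adjoin R (Set.range (Sum.elim (wX R) (wD R) : Fin n ⊕ Fin n → _))
      = (⊤ : Subalgebra R (WeylAlgebra R n)) := by
    have e : (Sum.elim (wX R) (wD R) : Fin n ⊕ Fin n → WeylAlgebra R n)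
        = RingQuot.mkAlgHom R (WeylRel R n) ∘ FreeAlgebra.ι R := by
      ext k; cases k <;> rfl
    rw [e, Set.range_comp, ← AlgHom.map_adjoin, FreeAlgebra.adjoin_range_ι, Algebra.map_top,
      AlgHom.range_eq_top]
    exact RingQuot.mkAlgHom_surjective R _
  have hbij := azumaya_of_weyl_gens (C := Subalgebra.center R (WeylAlgebra R n))
    (A := WeylAlgebra R n) hp hpA
    (fun a ha => ⟨⟨a, Subalgebra.mem_center_iff.mpr ha⟩, rfl⟩)
    (Sum.elim (wX R) (wD R) : Fin n ⊕ Fin n → _)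
    (Sum.elim (wD R) (fun i => - wX R i)) ?_ ?_ ?_ ?_ ?_
  · exact ⟨AlgHom.mulLeftRight _ _, fun a b x => AlgHom.mulLeftRight_apply _ _ a (op b) x, hbij⟩
  · rw [eq_top_iff]
    intro a _
    have ha : a ∈ Algebra.adjoin R
        (Set.range (Sum.elim (wX R) (wD R) : Fin n ⊕ Fin n → WeylAlgebra R n)) := by
      rw [hgen]; trivial
    induction ha using Algebra.adjoin_induction with
    | mem x hx => exact Algebra.subset_adjoin hx
    | algebraMap r =>
      exact Subalgebra.algebraMap_mem _
        (algebraMap R (Subalgebra.center R (WeylAlgebra R n)) r)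
    | add x y _ _ hx hy => exact add_mem (hx trivial) (hy trivial)
    | mul x y _ _ hx hy => exact mul_mem (hx trivial) (hy trivial)
  · rintro (i | i)
    · exact ⟨⟨_, hcen _ (Or.inl ⟨i, rfl⟩)⟩, rfl⟩
    · exact ⟨⟨_, hcen _ (Or.inr ⟨i, rfl⟩)⟩, rfl⟩
  · rintro (i | i) (j | j)
    · exact ⟨0, by simp [hxx i j]⟩
    · have h := hdx j i
      by_cases hji : j = i
      · rw [if_pos hji] at h
        exact ⟨-1, (weyl_aux_sub h).trans
          ((map_neg (algebraMap (Subalgebra.center R (WeylAlgebra R n)) (WeylAlgebra R n)) 1).trans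
            (congrArg _ (map_one _))).symm⟩
      · rw [if_neg hji, add_zero] at h
        exact ⟨0, (sub_eq_zero.mpr h.symm).trans (map_zero _).symm⟩
    · refine ⟨if i = j then 1 else 0, ?_⟩
      simp only [Sum.elim_inl, Sum.elim_inr, hdx]
      split_ifs <;> simp
    · exact ⟨0, by simp [hdd i j]⟩
  · rintro (i | i)
    · simp [hdx]
    · have h := hdx i i
      rw [if_pos rfl] at h
      exact weyl_aux_neg h
  · rintro (i | i) (j | j) hij
    · have : i ≠ j := fun h => hij (by rw [h])
      simp [hdx, this]
    · simp [hdd i j]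
    · exact weyl_aux_neg_comm (hxx i j)
    · have : j ≠ i := fun h => hij (by rw [h])
      have h := hdx j i
      rw [if_neg this, add_zero] at h
      exact weyl_aux_neg_comm h.symm
end

section
/- Let R be a commutative ring of prime characteristic p, A = A_n(R) the n-th Weyl algebra over R, and C = R[x_1^p, …, x_n^p, ∂_1^p, …, ∂_n^p] its center. For every R-algebra homomorphism φ: A → A one has φ(C) ⊆ C. -/
structure WeylSys {E : Type*} [Ring E] {n : ℕ} (x d : Fin n → E) : Prop where
  xx : ∀ i j, x i * x j = x j * x i
  dd : ∀ i j, d i * d j = d j * d i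
  dx : ∀ i j, d i * x j = x j * d i + if i = j then 1 else 0

theorem WeylSys.tail {E : Type*} [Ring E] {n : ℕ} {x d : Fin (n + 1) → E} (h : WeylSys x d) :
    WeylSys (fun i => x i.succ) (fun i => d i.succ) :=
  ⟨fun i j => h.xx _ _, fun i j => h.dd _ _, fun i j => by
    rw [h.dx]; simp⟩

theorem WeylSys.map {E F : Type*} [Ring E] [Ring F] {n : ℕ} {x d : Fin n → E} (h : WeylSys x d)
    (f : E →+* F) : WeylSys (fun i => f (x i)) (fun i => f (d i)) :=
  ⟨fun i j => by rw [← map_mul, h.xx, map_mul], fun i j => by rw [← map_mul, h.dd, map_mul],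
   fun i j => by
    rw [← map_mul, h.dx, map_add, map_mul]; split_ifs <;> simp⟩

/-- ordered monomials -/
def wmon {E : Type*} [Ring E] {n : ℕ} (x d : Fin n → E) (p : ℕ) (a : Fin n → Fin p × Fin p) : E :=
  (List.ofFn fun i => x i ^ ((a i).1 : ℕ) * d i ^ ((a i).2 : ℕ)).prod

theorem wmon_cons {E : Type*} [Ring E] {n : ℕ} (x d : Fin (n + 1) → E) (p : ℕ)
    (q : Fin p × Fin p) (a : Fin n → Fin p × Fin p) :
    wmon x d p (Fin.cons q a) = x 0 ^ (q.1 : ℕ) * d 0 ^ (q.2 : ℕ) *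
      wmon (fun i => x i.succ) (fun i => d i.succ) p a := by
  simp [wmon, List.ofFn_succ]

theorem wmon_map {E F : Type*} [Ring E] [Ring F] {n : ℕ} (x d : Fin n → E) (f : E →+* F) (p : ℕ)
    (a : Fin n → Fin p × Fin p) :
    f (wmon x d p a) = wmon (fun i => f (x i)) (fun i => f (d i)) p a := by
  simp [wmon, map_list_prod, List.map_ofFn, Function.comp_def]

theorem commute_wmon {E : Type*} [Ring E] {n : ℕ} (x d : Fin n → E) (p : ℕ)
    (a : Fin n → Fin p × Fin p) (z : E) (hx : ∀ i, Commute z (x i)) (hd : ∀ i, Commute z (d i)) :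
    Commute z (wmon x d p a) := by
  unfold wmon
  apply Commute.list_prod_right
  intro y hy
  rw [List.mem_ofFn] at hy
  obtain ⟨i, rfl⟩ := hy
  exact ((hx i).pow_right _).mul_right ((hd i).pow_right _)

theorem comm_pow_aux {E : Type*} [Ring E] {u v : E} (h : v * u = u * v + 1) (k : ℕ) :
    v * u ^ k = u ^ k * v + (k : E) * u ^ (k - 1) := by
  induction k with
  | zero => simp
  | succ k ih =>
    rw [pow_succ, ← mul_assoc, ih, add_mul, mul_assoc, h]
    rcases k with _ | k
    · simp
    · simp only [Nat.add_sub_cancel]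
      rw [mul_assoc (_ : E) _ u, ← pow_succ]
      push_cast
      noncomm_ring

theorem cancel_aux {E : Type*} [Ring E] {p : ℕ} (hp : p.Prime) (h0 : (p : E) = 0) (k : ℕ)
    (hk : 0 < k) (hkp : k < p) (g : E) (hg : (k : E) * g = 0) : g = 0 := by
  have hc : IsCoprime (k : ℤ) (p : ℤ) :=
    Nat.isCoprime_iff_coprime.2
      ((Nat.Prime.coprime_iff_not_dvd hp).2 (Nat.not_dvd_of_pos_of_lt hk hkp)).symm
  obtain ⟨a, b, hab⟩ := hc
  have := congrArg (fun t : ℤ => (t : E) * g) hab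
  simp only [Int.cast_add, Int.cast_mul, Int.cast_natCast, h0, mul_zero, add_zero, Int.cast_one,
    one_mul, mul_assoc, hg] at this
  exact this.symm

theorem sum_zero_aux {E : Type*} [Ring E] {p : ℕ} (hp : p.Prime) (h0 : (p : E) = 0) {u v : E}
    (h : v * u = u * v + 1) (m : ℕ) (hm : m ≤ p) (g : ℕ → E) (hg : ∀ a, Commute v (g a)) :
    (∑ a ∈ Finset.range m, u ^ a * g a = 0 → ∀ a < m, g a = 0) ∧
    (Commute v (∑ a ∈ Finset.range m, u ^ a * g a) → ∀ a < m, a ≠ 0 → g a = 0) := by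
  induction m generalizing g with
  | zero => simp
  | succ m ih =>
    have key : Commute v (∑ a ∈ Finset.range (m + 1), u ^ a * g a) →
        ∀ a < m + 1, a ≠ 0 → g a = 0 := by
      intro hc a ha ha0
      have h1 : ∑ a ∈ Finset.range m, u ^ a * ((a + 1 : ℕ) * g (a + 1)) = 0 := by
        have h2 : v * (∑ a ∈ Finset.range (m + 1), u ^ a * g a)
          - (∑ a ∈ Finset.range (m + 1), u ^ a * g a) * v = 0 := sub_eq_zero.2 hc
        rw [Finset.mul_sum, Finset.sum_mul, ← Finset.sum_sub_distrib] at h2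
        have h3 : ∀ a, v * (u ^ a * g a) - u ^ a * g a * v = (a : E) * (u ^ (a - 1) * g a) := by
          intro a
          rw [mul_assoc _ _ v, ← (hg a).eq, ← mul_assoc, comm_pow_aux h]
          noncomm_ring
        simp only [h3] at h2
        rw [Finset.sum_range_succ'] at h2
        simp only [Nat.cast_zero, zero_mul, add_zero, Nat.add_sub_cancel] at h2
        rw [← h2]
        refine Finset.sum_congr rfl fun a _ => ?_
        rw [← mul_assoc, ← mul_assoc, (Nat.cast_commute (a + 1) (u ^ a)).eq]
      obtain ⟨b, rfl⟩ := Nat.exists_eq_succ_of_ne_zero ha0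
      have := (ih (by omega) (fun a => ((a + 1 : ℕ) : E) * g (a + 1))
        (fun a => (Nat.cast_commute _ _).symm.mul_right (hg _))).1 h1 b (by omega)
      exact cancel_aux hp h0 (b + 1) (by omega) (by omega) _ this
    refine ⟨fun hs a ha => ?_, key⟩
    have h1 := key (by rw [hs]; exact Commute.zero_right _)
    by_cases ha0 : a = 0
    · subst ha0
      rw [Finset.sum_range_succ', Finset.sum_eq_zero] at hs
      · simpa using hs
      · intro b hb
        rw [h1 (b + 1) (by simpa using hb) (by simp), mul_zero]
    · exact h1 a ha ha0

theorem sum_fin_aux {E : Type*} [Ring E] {p : ℕ} (hp : p.Prime) (h0 : (p : E) = 0) {u v : E}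
    (h : v * u = u * v + 1) (g : Fin p → E) (hg : ∀ a, Commute v (g a)) :
    (∑ a : Fin p, u ^ (a : ℕ) * g a = 0 → ∀ a, g a = 0) ∧
    (Commute v (∑ a : Fin p, u ^ (a : ℕ) * g a) → ∀ a : Fin p, (a : ℕ) ≠ 0 → g a = 0) := by
  have := sum_zero_aux hp h0 h p le_rfl (fun a => if h : a < p then g ⟨a, h⟩ else 0) (fun a => by
    split_ifs
    · exact hg _
    · exact Commute.zero_right _)
  rw [← Fin.sum_univ_eq_sum_range
    (fun a => u ^ a * (if h : a < p then g ⟨a, h⟩ else 0))] at this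
  simp only [Fin.is_lt, dite_true, Fin.eta] at this
  refine ⟨fun hs a => ?_, fun hs a ha => ?_⟩
  · simpa using this.1 hs a a.2
  · simpa using this.2 hs a a.2 ha

theorem sum_cons_aux {E : Type*} [AddCommMonoid E] {n p : ℕ}
    (f : (Fin (n + 1) → Fin p × Fin p) → E) :
    ∑ a, f a = ∑ i : Fin p, ∑ j : Fin p, ∑ a : Fin n → Fin p × Fin p, f (Fin.cons (i, j) a) := by
  rw [← (Fin.consEquiv (fun _ : Fin (n + 1) => Fin p × Fin p)).sum_comp, Fintype.sum_prod_type,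
    Fintype.sum_prod_type]
  rfl

theorem decomp_aux {K E : Type*} [CommRing K] [Ring E] [Algebra K E] {n p : ℕ}
    (x d : Fin (n + 1) → E) (c : (Fin (n + 1) → Fin p × Fin p) → K) :
    ∑ a, c a • wmon x d p a = ∑ i : Fin p, x 0 ^ (i : ℕ) * ∑ j : Fin p, d 0 ^ (j : ℕ) *
      ∑ a, c (Fin.cons (i, j) a) • wmon (fun i => x i.succ) (fun i => d i.succ) p a := by
  rw [sum_cons_aux]
  simp only [wmon_cons, Finset.mul_sum, mul_smul_comm, mul_assoc]

theorem WeylSys.main {K E : Type*} [CommRing K] [Ring E] [Algebra K E] {p : ℕ}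
    (hp : p.Prime) (h0 : (p : E) = 0) : ∀ {n : ℕ} {x d : Fin n → E} (_ : WeylSys x d)
    (c : (Fin n → Fin p × Fin p) → K),
    (∑ a, c a • wmon x d p a = 0 → ∀ a, c a • (1 : E) = 0) ∧
    ((∀ i, Commute (x i) (∑ a, c a • wmon x d p a)) →
      (∀ i, Commute (d i) (∑ a, c a • wmon x d p a)) →
      ∃ r : K, ∑ a, c a • wmon x d p a = r • (1 : E)) := by
  intro n
  induction n with
  | zero =>
    intro x d h c
    have hs : ∑ a, c a • wmon x d p a = c default • (1 : E) := by
      rw [Fintype.sum_unique]; simp [wmon]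
    rw [hs]
    refine ⟨fun h a => ?_, fun _ _ => ⟨_, rfl⟩⟩
    rw [Subsingleton.elim a default, h]
  | succ n ih =>
    intro x d h c
    rw [decomp_aux]
    set F : Fin p → Fin p → E := fun i j => ∑ a, c (Fin.cons (i, j) a) •
      wmon (fun i => x i.succ) (fun i => d i.succ) p a with hF
    have hxF : ∀ i j, Commute (x 0) (F i j) := fun i j => by
      refine Commute.sum_right _ _ _ fun a _ => Commute.smul_right ?_ _
      refine commute_wmon _ _ _ _ _ (fun k => h.xx _ _) (fun k => ?_)
      have := h.dx k.succ 0
      rw [if_neg (Fin.succ_ne_zero k), add_zero] at this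
      exact this.symm
    have hdF : ∀ i j, Commute (d 0) (F i j) := fun i j => by
      refine Commute.sum_right _ _ _ fun a _ => Commute.smul_right ?_ _
      refine commute_wmon _ _ _ _ _ (fun k => ?_) (fun k => h.dd _ _)
      have := h.dx 0 k.succ
      rw [if_neg (Fin.succ_ne_zero k).symm, add_zero] at this
      exact this
    have h1 : d 0 * x 0 = x 0 * d 0 + 1 := by simpa using h.dx 0 0
    have h2 : (-x 0) * d 0 = d 0 * (-x 0) + 1 := by rw [mul_neg, h1]; noncomm_ring
    have hdG : ∀ i, Commute (d 0) (∑ j : Fin p, d 0 ^ (j : ℕ) * F i j) := fun i =>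
      Commute.sum_right _ _ _ fun j _ => ((Commute.refl _).pow_right _).mul_right (hdF i j)
    have A := sum_fin_aux hp h0 h1 (fun i => ∑ j : Fin p, d 0 ^ (j : ℕ) * F i j) hdG
    have B := fun i => sum_fin_aux hp h0 h2 (F i) (fun j => (hxF i j).neg_left)
    change (∑ i : Fin p, x 0 ^ (i : ℕ) * ∑ j : Fin p, d 0 ^ (j : ℕ) * F i j = 0 → _) ∧
      ((∀ i, Commute (x i) (∑ i : Fin p, x 0 ^ (i : ℕ) * ∑ j : Fin p, d 0 ^ (j : ℕ) * F i j)) →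
      (∀ i, Commute (d i) (∑ i : Fin p, x 0 ^ (i : ℕ) * ∑ j : Fin p, d 0 ^ (j : ℕ) * F i j)) →
      ∃ r : K, ∑ i : Fin p, x 0 ^ (i : ℕ) * ∑ j : Fin p, d 0 ^ (j : ℕ) * F i j = r • (1 : E))
    constructor
    · intro hs a
      have := (B (a 0).1).1 (A.1 hs (a 0).1) (a 0).2
      have := (ih h.tail _).1 this (fun i => a i.succ)
      rw [Prod.mk.eta] at this
      rwa [show (Fin.cons (a 0) (fun i => a i.succ) : Fin (n + 1) → Fin p × Fin p) = a from
        Fin.cons_self_tail a] at this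
    · intro hx hd
      haveI : NeZero p := ⟨hp.ne_zero⟩
      have e1 : ∑ i : Fin p, x 0 ^ (i : ℕ) * ∑ j : Fin p, d 0 ^ (j : ℕ) * F i j
          = ∑ j : Fin p, d 0 ^ (j : ℕ) * F 0 j := by
        rw [Finset.sum_eq_single (0 : Fin p)]
        · simp
        · intro b _ hb
          rw [A.2 (hd 0) b (by simpa using hb), mul_zero]
        · simp
      rw [e1] at hx hd ⊢
      have e2 : ∑ j : Fin p, d 0 ^ (j : ℕ) * F 0 j = F 0 0 := by
        rw [Finset.sum_eq_single (0 : Fin p)]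
        · simp
        · intro b _ hb
          rw [(B 0).2 (hx 0).neg_left b (by simpa using hb), mul_zero]
        · simp
      rw [e2] at hx hd ⊢
      exact (ih h.tail _).2 (fun i => hx i.succ) (fun i => hd i.succ)

theorem one_pair_aux {K E : Type*} [CommRing K] [Ring E] [Algebra K E] {p : ℕ} {x d : E}
    (hxp : ∃ r : K, x ^ p = r • (1 : E)) (hdp : ∃ r : K, d ^ p = r • (1 : E))
    (a b : ℕ) (ha : a ≤ p) (hb : b ≤ p) (hp : 0 < p) :
    x ^ a * d ^ b ∈ Submodule.span K
      (Set.range fun q : Fin p × Fin p => x ^ (q.1 : ℕ) * d ^ (q.2 : ℕ)) := by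
  have key : ∀ a' < p, ∀ b' < p, x ^ a' * d ^ b' ∈ Submodule.span K
      (Set.range fun q : Fin p × Fin p => x ^ (q.1 : ℕ) * d ^ (q.2 : ℕ)) := fun a' ha b' hb =>
    Submodule.subset_span ⟨(⟨a', ha⟩, ⟨b', hb⟩), rfl⟩
  obtain ⟨r, hr⟩ := hxp
  obtain ⟨s, hs⟩ := hdp
  have key2 : ∀ a' < p, x ^ a' * d ^ b ∈ Submodule.span K
      (Set.range fun q : Fin p × Fin p => x ^ (q.1 : ℕ) * d ^ (q.2 : ℕ)) := fun a' ha => by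
    rcases hb.lt_or_eq with hb | rfl
    · exact key _ ha _ hb
    · rw [hs, mul_smul_comm]
      simpa using Submodule.smul_mem _ s (key a' ha 0 hp)
  rcases ha.lt_or_eq with ha | rfl
  · exact key2 _ ha
  · rw [hr, smul_mul_assoc]
    simpa using Submodule.smul_mem _ r (key2 0 hp)

theorem cons_mem_aux {K E : Type*} [CommRing K] [Ring E] [Algebra K E] {n p : ℕ}
    (x d : Fin (n + 1) → E) (y z : E)
    (hy : y ∈ Submodule.span K
      (Set.range fun q : Fin p × Fin p => x 0 ^ (q.1 : ℕ) * d 0 ^ (q.2 : ℕ)))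
    (hz : z ∈ Submodule.span K
      (Set.range (wmon (fun i => x i.succ) (fun i => d i.succ) p))) :
    y * z ∈ Submodule.span K (Set.range (wmon x d p)) := by
  have := Submodule.mul_mem_mul hy hz
  rw [Submodule.span_mul_span] at this
  refine Submodule.span_mono ?_ this
  rintro _ ⟨_, ⟨q, rfl⟩, _, ⟨a, rfl⟩, rfl⟩
  exact ⟨Fin.cons q a, wmon_cons _ _ _ _ _⟩

theorem WeylSys.mul_mem {K E : Type*} [CommRing K] [Ring E] [Algebra K E] {p : ℕ} (hp : p.Prime) :
    ∀ {n : ℕ} {x d : Fin n → E} (_ : WeylSys x d)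
    (_ : ∀ i, ∃ r : K, x i ^ p = r • (1 : E)) (_ : ∀ i, ∃ r : K, d i ^ p = r • (1 : E))
    (i : Fin n) (a : Fin n → Fin p × Fin p),
    x i * wmon x d p a ∈ Submodule.span K (Set.range (wmon x d p)) ∧
    d i * wmon x d p a ∈ Submodule.span K (Set.range (wmon x d p)) := by
  intro n
  induction n with
  | zero => intro x d _ _ _ i; exact i.elim0
  | succ n ih =>
    intro x d h hx hd i a
    rw [← Fin.cons_self_tail a, wmon_cons]
    have h1 : d 0 * x 0 = x 0 * d 0 + 1 := by simpa using h.dx 0 0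
    have hp0 := hp.pos
    have hT : wmon (fun i => x i.succ) (fun i => d i.succ) p (Fin.tail a) ∈ Submodule.span K
      (Set.range (wmon (fun i => x i.succ) (fun i => d i.succ) p)) :=
      Submodule.subset_span ⟨_, rfl⟩
    have ha1 := (a 0).1.2
    have ha2 := (a 0).2.2
    refine Fin.cases ?_ (fun i => ?_) i
    · constructor
      · rw [← mul_assoc, ← mul_assoc, ← pow_succ']
        exact cons_mem_aux x d _ _
          (one_pair_aux (hx 0) (hd 0) _ _ (by omega) (by omega) hp0) hT
      · rw [← mul_assoc, ← mul_assoc, comm_pow_aux h1]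
        refine cons_mem_aux x d _ _ ?_ hT
        rw [add_mul, mul_assoc, ← pow_succ']
        refine add_mem (one_pair_aux (hx 0) (hd 0) _ _ (by omega) (by omega) hp0) ?_
        rw [mul_assoc, ← nsmul_eq_mul]
        exact nsmul_mem (one_pair_aux (hx 0) (hd 0) _ _ (by omega) (by omega) hp0) _
    · have := ih h.tail (fun i => hx i.succ) (fun i => hd i.succ) i (Fin.tail a)
      have c1 : Commute (x i.succ) (x 0 ^ ((a 0).1 : ℕ) * d 0 ^ ((a 0).2 : ℕ)) := by
        refine Commute.mul_right (Commute.pow_right (h.xx _ _) _) (Commute.pow_right ?_ _)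
        have := h.dx 0 i.succ
        rw [if_neg (Fin.succ_ne_zero i).symm, add_zero] at this
        exact this.symm
      have c2 : Commute (d i.succ) (x 0 ^ ((a 0).1 : ℕ) * d 0 ^ ((a 0).2 : ℕ)) := by
        refine Commute.mul_right (Commute.pow_right ?_ _) (Commute.pow_right (h.dd _ _) _)
        have := h.dx i.succ 0
        rw [if_neg (Fin.succ_ne_zero i), add_zero] at this
        exact this
      have hq := one_pair_aux (hx 0) (hd 0) (a 0).1 (a 0).2 (by omega) (by omega) hp0
      rw [← mul_assoc, c1.eq, mul_assoc _ (x i.succ), ← mul_assoc (d i.succ), c2.eq,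
        mul_assoc _ (d i.succ)]
      exact ⟨cons_mem_aux x d _ _ hq this.1, cons_mem_aux x d _ _ hq this.2⟩

theorem WeylSys.span_top {K E : Type*} [CommRing K] [Ring E] [Algebra K E] {p : ℕ} (hp : p.Prime)
    {n : ℕ} {x d : Fin n → E} (h : WeylSys x d)
    (hx : ∀ i, ∃ r : K, x i ^ p = r • (1 : E)) (hd : ∀ i, ∃ r : K, d i ^ p = r • (1 : E))
    (hgen : Algebra.adjoin K (Set.range x ∪ Set.range d) = ⊤) :
    Submodule.span K (Set.range (wmon x d p)) = ⊤ := by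
  set M := Submodule.span K (Set.range (wmon x d p)) with hM
  have hone : (1 : E) ∈ M := by
    refine Submodule.subset_span ⟨fun _ => (⟨0, hp.pos⟩, ⟨0, hp.pos⟩), ?_⟩
    simp [wmon]
  have hmul : ∀ y : E, ∀ m ∈ M, y * m ∈ M := by
    intro y
    have hy : y ∈ Algebra.adjoin K (Set.range x ∪ Set.range d) := hgen ▸ Algebra.mem_top
    induction hy using Algebra.adjoin_induction with
    | mem y hy =>
      intro m hm
      have : M ≤ M.comap (LinearMap.mulLeft K y) := by
        rw [hM, Submodule.span_le]
        rintro _ ⟨a, rfl⟩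
        rcases hy with ⟨i, rfl⟩ | ⟨i, rfl⟩
        · exact (h.mul_mem hp hx hd i a).1
        · exact (h.mul_mem hp hx hd i a).2
      exact this hm
    | algebraMap r => intro m hm; rw [← Algebra.smul_def]; exact M.smul_mem r hm
    | add y z _ _ h1 h2 => intro m hm; rw [add_mul]; exact add_mem (h1 m hm) (h2 m hm)
    | mul y z _ _ h1 h2 => intro m hm; rw [mul_assoc]; exact h1 _ (h2 m hm)
  rw [eq_top_iff]
  intro y _
  simpa using hmul y 1 hone

theorem field_span_aux {K E : Type*} [Field K] [Ring E] [Algebra K E] {p : ℕ} (hp : p.Prime)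
    (h0 : (p : E) = 0) {n : ℕ} {x d u v : Fin n → E} (h' : WeylSys u v)
    (hs : Submodule.span K (Set.range (wmon x d p)) = ⊤) :
    Submodule.span K (Set.range (wmon u v p)) = ⊤ := by
  rcases subsingleton_or_nontrivial E with hE | hE
  · exact Subsingleton.elim _ _
  have hfin : Module.Finite K E := Module.Finite.of_fg_top (by
    rw [← hs]; exact Submodule.fg_span (Set.finite_range _))
  have hli : LinearIndependent K (wmon u v p) := by
    rw [Fintype.linearIndependent_iff]
    intro c hc a
    have := (h'.main hp h0 c).1 hc a
    rcases smul_eq_zero.1 this with h | h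
    · exact h
    · exact absurd h one_ne_zero
  refine hli.span_eq_top_of_card_eq_finrank' (le_antisymm hli.fintype_card_le_finrank ?_)
  have := finrank_range_le_card (R := K) (wmon x d p)
  rw [Set.finrank, hs, finrank_top] at this
  exact this

open scoped TensorProduct in
theorem ring_span_aux {K E : Type*} [CommRing K] [Ring E] [Algebra K E] {p : ℕ} (hp : p.Prime)
    (h0 : (p : E) = 0) {n : ℕ} {x d u v : Fin n → E} (h' : WeylSys u v)
    (hs : Submodule.span K (Set.range (wmon x d p)) = ⊤) :
    Submodule.span K (Set.range (wmon u v p)) = ⊤ := by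
  have hfin : Module.Finite K E := Module.Finite.of_fg_top (by
    rw [← hs]; exact Submodule.fg_span (Set.finite_range _))
  set N := Submodule.span K (Set.range (wmon u v p)) with hN
  rw [← Submodule.Quotient.subsingleton_iff, ← Module.support_eq_empty_iff (R := K),
    Set.eq_empty_iff_forall_notMem]
  intro P hP
  rw [Module.mem_support_iff_nontrivial_residueField_tensorProduct] at hP
  revert hP
  rw [imp_false, not_nontrivial_iff_subsingleton]
  let κ := P.asIdeal.ResidueField
  let f : E →+* κ ⊗[K] E := (Algebra.TensorProduct.includeRight : E →ₐ[K] κ ⊗[K] E).toRingHom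
  have hf : ∀ e, f e = 1 ⊗ₜ e := fun e => rfl
  have h0' : (p : κ ⊗[K] E) = 0 := by rw [← map_natCast f, h0, map_zero]
  have hs' : Submodule.span κ (Set.range (wmon (fun i => f (x i)) (fun i => f (d i)) p)) = ⊤ := by
    have := congrArg (Submodule.baseChange κ) hs
    rw [Submodule.baseChange_span, Submodule.baseChange_top, ← Set.range_comp] at this
    rw [← this]
    congr 2
    funext a
    rw [← wmon_map]
    rfl
  have key := field_span_aux hp h0' (h'.map f) hs'
  have hsurj : Function.Surjective ((N.mkQ).baseChange κ) :=
    LinearMap.lTensor_surjective _ N.mkQ_surjective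
  have hz : (N.mkQ).baseChange κ = 0 := by
    refine LinearMap.ext_on_range key fun a => ?_
    rw [← wmon_map, hf, LinearMap.baseChange_tmul]
    have : N.mkQ (wmon u v p a) = 0 := by
      rw [Submodule.mkQ_apply, Submodule.Quotient.mk_eq_zero]
      exact Submodule.subset_span ⟨a, rfl⟩
    rw [this]; simp
  refine ⟨fun a b => ?_⟩
  obtain ⟨a, rfl⟩ := hsurj a
  obtain ⟨b, rfl⟩ := hsurj b
  rw [hz]; simp

theorem WeylSys.pow_comm {E : Type*} [Ring E] {p : ℕ} (h0 : (p : E) = 0) {n : ℕ}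
    {u v : Fin n → E} (h : WeylSys u v) (i : Fin n) :
    (∀ j, Commute (u i ^ p) (u j) ∧ Commute (u i ^ p) (v j)) ∧
    (∀ j, Commute (v i ^ p) (u j) ∧ Commute (v i ^ p) (v j)) := by
  have hc : ∀ i j, i ≠ j → Commute (v i) (u j) := fun i j hij => by
    have := h.dx i j
    rwa [if_neg hij, add_zero] at this
  have h1 : ∀ i, v i * u i = u i * v i + 1 := fun i => by simpa using h.dx i i
  have h2 : (-u i) * v i = v i * (-u i) + 1 := by rw [mul_neg, h1]; noncomm_ring
  have e1 : Commute (v i) (u i ^ p) := by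
    have := comm_pow_aux (h1 i) p
    rwa [h0, zero_mul, add_zero] at this
  have e2 : Commute (-u i) (v i ^ p) := by
    have := comm_pow_aux h2 p
    rwa [h0, zero_mul, add_zero] at this
  refine ⟨fun j => ⟨Commute.pow_left (h.xx i j) _, ?_⟩,
    fun j => ⟨?_, Commute.pow_left (h.dd i j) _⟩⟩
  · by_cases hij : j = i
    · subst hij; exact e1.symm
    · exact (hc j i hij).symm.pow_left _
  · by_cases hij : i = j
    · subst hij; simpa using e2.symm
    · exact (hc i j hij).pow_left _

theorem central_aux {K E : Type*} [CommRing K] [Ring E] [Algebra K E] {p : ℕ}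
    {n : ℕ} {u v : Fin n → E} (hs : Submodule.span K (Set.range (wmon u v p)) = ⊤) (z : E)
    (h : ∀ j, Commute z (u j) ∧ Commute z (v j)) (y : E) : Commute z y := by
  have hy : y ∈ Submodule.span K (Set.range (wmon u v p)) := hs ▸ Submodule.mem_top
  induction hy using Submodule.span_induction with
  | mem y hy =>
    obtain ⟨a, rfl⟩ := hy
    exact commute_wmon _ _ _ _ _ (fun j => (h j).1) (fun j => (h j).2)
  | zero => exact Commute.zero_right _
  | add a b _ _ ha hb => exact ha.add_right hb
  | smul r a _ ha => exact ha.smul_right r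

theorem center_mem_aux {K E : Type*} [CommRing K] [Ring E] [Algebra K E] {p : ℕ} (hp : p.Prime)
    (h0 : (p : E) = 0) {n : ℕ} {x d : Fin n → E} (h : WeylSys x d)
    (hs : Submodule.span K (Set.range (wmon x d p)) = ⊤) (z : E) (hz : ∀ y, Commute z y) :
    ∃ r : K, z = r • (1 : E) := by
  have hy : z ∈ Submodule.span K (Set.range (wmon x d p)) := hs ▸ Submodule.mem_top
  rw [Submodule.mem_span_range_iff_exists_fun] at hy
  obtain ⟨c, rfl⟩ := hy
  exact (h.main hp h0 c).2 (fun i => (hz _).symm) (fun i => (hz _).symm)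

theorem abstract_main {K E : Type*} [CommRing K] [Ring E] [Algebra K E] {p : ℕ} (hp : p.Prime)
    (h0 : (p : E) = 0) {n : ℕ} {x d u v : Fin n → E} (h : WeylSys x d) (h' : WeylSys u v)
    (hx : ∀ i, ∃ r : K, x i ^ p = r • (1 : E)) (hd : ∀ i, ∃ r : K, d i ^ p = r • (1 : E))
    (hgen : Algebra.adjoin K (Set.range x ∪ Set.range d) = ⊤) (i : Fin n) :
    (∃ r : K, u i ^ p = r • (1 : E)) ∧ (∃ r : K, v i ^ p = r • (1 : E)) := by
  have hs := h.span_top hp hx hd hgen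
  have hs' := ring_span_aux hp h0 h' hs
  exact ⟨center_mem_aux hp h0 h hs _ (central_aux hs' _ (h'.pow_comm h0 i).1),
    center_mem_aux hp h0 h hs _ (central_aux hs' _ (h'.pow_comm h0 i).2)⟩

theorem weylSys_weyl (R : Type*) [CommRing R] (n : ℕ) :
    WeylSys (fun i : Fin n => wX R i) (fun i => wD R i) := by
  refine ⟨fun i j => ?_, fun i j => ?_, fun i j => ?_⟩
  · simpa [wX] using RingQuot.mkAlgHom_rel R (WeylRel.xx (R := R) i j)
  · simpa [wD] using RingQuot.mkAlgHom_rel R (WeylRel.dd (R := R) i j)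
  · have := RingQuot.mkAlgHom_rel R (WeylRel.dx (R := R) i j)
    rw [map_add, map_mul, map_mul] at this
    simp only [wX, wD]
    rw [this]
    split_ifs <;> simp

theorem weyl_adjoin (R : Type*) [CommRing R] (n : ℕ) :
    Algebra.adjoin R ((Set.range fun i : Fin n => wX R i) ∪ Set.range fun i => wD R i) = ⊤ := by
  have h1 := FreeAlgebra.adjoin_range_ι R (Fin n ⊕ Fin n)
  have h2 := congrArg (Subalgebra.map (RingQuot.mkAlgHom R (WeylRel R n))) h1
  rw [AlgHom.map_adjoin, Algebra.map_top,
    (AlgHom.range_eq_top _).2 (RingQuot.mkAlgHom_surjective R (WeylRel R n)), ← Set.range_comp] at h2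
  rw [← h2]
  congr 1
  ext y
  simp [wX, wD, Set.mem_union]

/-- The polynomial ring of `p`-th powers, mapping to the Weyl algebra. -/
theorem weyl_pows (R : Type*) [CommRing R] (n p : ℕ) (hp : p.Prime) [CharP R p]
    {u v : Fin n → WeylAlgebra R n} (h' : WeylSys u v) (i : Fin n) :
    u i ^ p ∈ Algebra.adjoin R (pPowSet R n p) ∧ v i ^ p ∈ Algebra.adjoin R (pPowSet R n p) := by
  have h0 : (p : WeylAlgebra R n) = 0 := by
    rw [← map_natCast (algebraMap R (WeylAlgebra R n)), CharP.cast_eq_zero, map_zero]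
  have h := weylSys_weyl R n
  have hcen : ∀ z : WeylAlgebra R n, (∀ j, Commute z (wX R j) ∧ Commute z (wD R j)) →
      z ∈ Subalgebra.center R (WeylAlgebra R n) := by
    intro z hz
    rw [Subalgebra.mem_center_iff]
    intro y
    have hy : y ∈ Algebra.adjoin R
      ((Set.range fun i : Fin n => wX R i) ∪ Set.range fun i => wD R i) :=
      weyl_adjoin R n ▸ Algebra.mem_top
    have : Commute z y := by
      refine Algebra.commute_of_mem_adjoin_of_forall_mem_commute hy ?_
      rintro _ (⟨j, rfl⟩ | ⟨j, rfl⟩)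
      · exact (hz j).1
      · exact (hz j).2
    exact this.eq.symm
  let g : Fin n ⊕ Fin n → Subalgebra.center R (WeylAlgebra R n) :=
    Sum.elim (fun i => ⟨wX R i ^ p, hcen _ (h.pow_comm h0 i).1⟩)
      (fun i => ⟨wD R i ^ p, hcen _ (h.pow_comm h0 i).2⟩)
  let F : MvPolynomial (Fin n ⊕ Fin n) R →ₐ[R] WeylAlgebra R n :=
    (Subalgebra.center R (WeylAlgebra R n)).val.comp (MvPolynomial.aeval g)
  have hF : ∀ q, F q ∈ Algebra.adjoin R (pPowSet R n p) := by
    intro q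
    induction q using MvPolynomial.induction_on with
    | C r => 
      rw [← MvPolynomial.algebraMap_eq, AlgHom.commutes]
      exact Subalgebra.algebraMap_mem _ _
    | add a b ha hb => rw [map_add]; exact add_mem ha hb
    | mul_X a i ha =>
      rw [map_mul]
      refine mul_mem ha (Algebra.subset_adjoin ?_)
      rcases i with i | i
      · left; exact ⟨i, by simp [F, g]⟩
      · right; exact ⟨i, by simp [F, g]⟩
  letI alg : Algebra (MvPolynomial (Fin n ⊕ Fin n) R) (WeylAlgebra R n) :=
    F.toRingHom.toAlgebra' (fun c y =>
      (Subalgebra.mem_center_iff.1 (MvPolynomial.aeval g c).2 y).symm)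
  have hsm : ∀ q : MvPolynomial (Fin n ⊕ Fin n) R, q • (1 : WeylAlgebra R n) = F q := fun q => by
    rw [← Algebra.algebraMap_eq_smul_one]; rfl
  have hgen : Algebra.adjoin (MvPolynomial (Fin n ⊕ Fin n) R)
      ((Set.range fun i : Fin n => wX R i) ∪ Set.range fun i => wD R i) = ⊤ := by
    rw [eq_top_iff]
    intro y _
    have hy : y ∈ Algebra.adjoin R
      ((Set.range fun i : Fin n => wX R i) ∪ Set.range fun i => wD R i) :=
      weyl_adjoin R n ▸ Algebra.mem_top
    induction hy using Algebra.adjoin_induction with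
    | mem y hy => exact Algebra.subset_adjoin hy
    | algebraMap r =>
      rw [← F.commutes r]
      exact Subalgebra.algebraMap_mem _ (algebraMap R (MvPolynomial (Fin n ⊕ Fin n) R) r)
    | add y z _ _ h1 h2 => exact add_mem (h1 trivial) (h2 trivial)
    | mul y z _ _ h1 h2 => exact mul_mem (h1 trivial) (h2 trivial)
  obtain ⟨⟨r, hr⟩, ⟨s, hs⟩⟩ := abstract_main (K := MvPolynomial (Fin n ⊕ Fin n) R) hp h0 h h'
    (fun i => ⟨MvPolynomial.X (.inl i), by rw [hsm]; simp [F, g]⟩)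
    (fun i => ⟨MvPolynomial.X (.inr i), by rw [hsm]; simp [F, g]⟩) hgen i
  rw [hr, hs, hsm, hsm]
  exact ⟨hF r, hF s⟩

/-- Let `R` be a commutative ring of prime characteristic `p`, `A = A_n(R)`
the `n`-th Weyl algebra and `C = R[x_1^p, …, x_n^p, ∂_1^p, …, ∂_n^p]` its center.  Every
`R`-algebra homomorphism `φ : A → A` satisfies `φ(C) ⊆ C`. -/
theorem weylAlgebra_endomorphism_maps_center_into_center (R : Type*) [CommRing R] (n p : ℕ)
    (hp : p.Prime) [CharP R p]
    (φ : WeylAlgebra R n →ₐ[R] WeylAlgebra R n) :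
    ∀ a ∈ Algebra.adjoin R (pPowSet R n p), φ a ∈ Algebra.adjoin R (pPowSet R n p) := by
  have h' := (weylSys_weyl R n).map φ.toRingHom
  intro a ha
  induction ha using Algebra.adjoin_induction with
  | mem y hy =>
    rcases hy with ⟨i, rfl⟩ | ⟨i, rfl⟩
    · simpa using (weyl_pows R n p hp h' i).1
    · simpa using (weyl_pows R n p hp h' i).2
  | algebraMap r => rw [AlgHom.commutes]; exact Subalgebra.algebraMap_mem _ _
  | add y z _ _ h1 h2 => rw [map_add]; exact add_mem h1 h2
  | mul y z _ _ h1 h2 => rw [map_mul]; exact mul_mem h1 h2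
end

section
/- Let R be a commutative ring of prime characteristic p, A = A_n(R) the n-th Weyl algebra over R, and C = R[x_1^p, …, x_n^p, ∂_1^p, …, ∂_n^p] its center. An R-algebra homomorphism φ: A → A is an isomorphism if and only if its restriction φ|_C : C → C is an isomorphism. -/
section WeylAbstract

/-- Commuting operators `P k`, commuting nilpotent operators `d k`, Weyl relations. -/
structure WData {ι C M : Type*} [CommRing C] [AddCommGroup M] [Module C M]
    (p : ℕ) (P d : ι → Module.End C M) : Prop where
  PP : ∀ k l a, P k (P l a) = P l (P k a)
  dd : ∀ k l a, d k (d l a) = d l (d k a)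
  dP : ∀ k l a, k ≠ l → d k (P l a) = P l (d k a)
  dPs : ∀ k a, d k (P k a) = P k (d k a) + a
  nil : ∀ k a, (d k ^ p) a = 0
  char : ∀ a : M, p • a = 0

variable {ι C M : Type*} [CommRing C] [AddCommGroup M] [Module C M]

theorem fact_inv {p : ℕ} (hp : p.Prime) (char : ∀ a : M, p • a = 0) (m : ℕ) (hm : m < p) :
    ∃ q : ℤ, ∀ a : M, q • (m.factorial • a) = a := by
  have hc : Nat.Coprime m.factorial p := by
    rw [Nat.coprime_comm]
    exact (Nat.Prime.coprime_iff_not_dvd hp).2 (fun h => by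
      have := (Nat.Prime.dvd_factorial hp).1 h; omega)
  have h := Nat.isCoprime_iff_coprime.2 hc
  obtain ⟨u, v, huv⟩ := h
  refine ⟨u, fun a => ?_⟩
  have h1 : (u * (m.factorial : ℤ) + v * (p : ℤ)) • a = a := by rw [huv, one_smul]
  rw [add_smul, mul_smul, mul_smul, natCast_zsmul, natCast_zsmul, char, smul_zero, add_zero] at h1
  exact h1

theorem d_Ppow (P d : Module.End C M) (h : ∀ a, d (P a) = P (d a) + a) (m : ℕ) (a : M) :
    d ((P ^ (m + 1)) a) = (P ^ (m + 1)) (d a) + (m + 1) • (P ^ m) a := by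
  induction m with
  | zero => simp [h]
  | succ m ih =>
    rw [pow_succ' P (m + 1), Module.End.mul_apply, h, ih, Module.End.mul_apply, map_add, map_nsmul,
      ← Module.End.mul_apply P (P ^ m), ← pow_succ', add_assoc, ← succ_nsmul]

theorem dpow_Ppow (P d : Module.End C M) (h : ∀ a, d (P a) = P (d a) + a) (m : ℕ) (a : M)
    (ha : d a = 0) : (d ^ m) ((P ^ m) a) = m.factorial • a := by
  induction m with
  | zero => simp
  | succ m ih =>
    rw [pow_succ d, Module.End.mul_apply, d_Ppow P d h, ha, map_zero, zero_add, map_nsmul, ih,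
      ← mul_smul, Nat.factorial_succ]

theorem dpow_Ppow_lt (P d : Module.End C M) (h : ∀ a, d (P a) = P (d a) + a) (m j : ℕ) (a : M)
    (ha : d a = 0) (hj : m < j) : (d ^ j) ((P ^ m) a) = 0 := by
  obtain ⟨t, rfl⟩ := Nat.exists_eq_add_of_lt hj
  rw [show m + t + 1 = t + (1 + m) by ring, pow_add, pow_add, Module.End.mul_apply,
    Module.End.mul_apply, dpow_Ppow P d h m a ha]
  simp [ha]

/-- One variable decomposition. -/
theorem one_var_aux {p : ℕ} (hp : p.Prime) (char : ∀ a : M, p • a = 0) (P d : Module.End C M)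
    (h : ∀ a, d (P a) = P (d a) + a) (N N' : Submodule C M) (hPN : ∀ a ∈ N, P a ∈ N)
    (hdN : ∀ a ∈ N, d a ∈ N) (hN' : ∀ a, a ∈ N' ↔ a ∈ N ∧ d a = 0) (m : ℕ) (hm : m ≤ p) :
    ∃ F : (Fin m → N') →ₗ[C] M, Function.Injective F ∧
      ∀ a, a ∈ LinearMap.range F ↔ a ∈ N ∧ (d ^ m) a = 0 := by
  have hPN' : ∀ j, ∀ a ∈ N, (P ^ j) a ∈ N := by
    intro j
    induction j with
    | zero => simp
    | succ j ih => intro a ha; rw [pow_succ, Module.End.mul_apply]; exact ih _ (hPN _ ha)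
  have hdN' : ∀ j, ∀ a ∈ N, (d ^ j) a ∈ N := by
    intro j
    induction j with
    | zero => simp
    | succ j ih => intro a ha; rw [pow_succ, Module.End.mul_apply]; exact ih _ (hdN _ ha)
  induction m with
  | zero =>
    refine ⟨0, Function.injective_of_subsingleton _, fun a => ?_⟩
    simp only [LinearMap.range_zero, Submodule.mem_bot, pow_zero, Module.End.one_apply]
    exact ⟨fun h => by simp [h], fun h => h.2⟩
  | succ m ih =>
    obtain ⟨F, hF, hr⟩ := ih (by omega)
    obtain ⟨q, hq⟩ := fact_inv (M := M) hp char m (by omega)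
    let G : (Fin (m + 1) → N') →ₗ[C] M :=
      F ∘ₗ LinearMap.funLeft C N' (Fin.castSucc) +
        (P ^ m) ∘ₗ N'.subtype ∘ₗ LinearMap.proj (Fin.last m)
    have hG : ∀ c, G c = F (fun i => c i.castSucc) + (P ^ m) (c (Fin.last m) : M) := fun c => rfl
    have hd : ∀ c, (d ^ m) (G c) = m.factorial • (c (Fin.last m) : M) := by
      intro c
      have := ((hr (F fun i => c i.castSucc)).1 ⟨_, rfl⟩).2
      rw [hG, map_add, this, zero_add,
        dpow_Ppow P d h m _ ((hN' _).1 (c (Fin.last m)).2).2]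
    refine ⟨G, ?_, fun a => ⟨?_, ?_⟩⟩
    · rw [injective_iff_map_eq_zero]
      intro c hc
      have h1 := hd c
      rw [hc, map_zero] at h1
      have h2 : (c (Fin.last m) : M) = 0 := by rw [← hq (c (Fin.last m) : M), ← h1, smul_zero]
      have h3 := hG c
      rw [hc, h2, map_zero, add_zero] at h3
      have h4 := (injective_iff_map_eq_zero F).1 hF _ h3.symm
      funext i
      refine Fin.lastCases ?_ (fun i => ?_) i
      · exact Subtype.ext h2
      · exact congrFun h4 i
    · rintro ⟨c, rfl⟩
      refine ⟨?_, ?_⟩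
      · rw [hG]
        exact N.add_mem ((hr (F fun i => c i.castSucc)).1 ⟨_, rfl⟩).1
          (hPN' _ _ ((hN' _).1 (c (Fin.last m)).2).1)
      · rw [pow_succ', Module.End.mul_apply, hd, map_nsmul,
          ((hN' _).1 (c (Fin.last m)).2).2, smul_zero]
    · rintro ⟨ha, hda⟩
      have hb : q • (d ^ m) a ∈ N' := by
        rw [hN']
        refine ⟨N.toAddSubgroup.zsmul_mem (hdN' _ _ ha) _, ?_⟩
        rw [map_zsmul, ← Module.End.mul_apply, ← pow_succ', hda, smul_zero]
      have hc : a - (P ^ m) (q • (d ^ m) a) ∈ LinearMap.range F := by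
        rw [hr]
        refine ⟨N.sub_mem ha (hPN' _ _ ((hN' _).1 hb).1), ?_⟩
        rw [map_sub, dpow_Ppow P d h m _ ((hN' _).1 hb).2, smul_comm, hq, sub_self]
      obtain ⟨c, hc⟩ := hc
      refine ⟨Fin.snoc (α := fun _ => N') c ⟨_, hb⟩, ?_⟩
      rw [hG]
      simp [hc]

theorem one_var {p : ℕ} (hp : p.Prime) (char : ∀ a : M, p • a = 0) (P d : Module.End C M)
    (h : ∀ a, d (P a) = P (d a) + a) (N N' : Submodule C M) (hPN : ∀ a ∈ N, P a ∈ N)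
    (hdN : ∀ a ∈ N, d a ∈ N) (hN' : ∀ a, a ∈ N' ↔ a ∈ N ∧ d a = 0)
    (nil : ∀ a, (d ^ p) a = 0) : Nonempty (N ≃ₗ[C] (Fin p → N')) := by
  obtain ⟨F, hF, hr⟩ := one_var_aux hp char P d h N N' hPN hdN hN' p le_rfl
  have : LinearMap.range F = N := by ext a; rw [hr]; simp [nil]
  exact ⟨((LinearEquiv.ofInjective F hF).trans (LinearEquiv.ofEq _ _ this)).symm⟩

/-- Common kernel. -/
def KS (d : ι → Module.End C M) (S : Finset ι) : Submodule C M where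
  carrier := {a | ∀ k ∈ S, d k a = 0}
  add_mem' := fun ha hb k hk => by rw [map_add, ha k hk, hb k hk, add_zero]
  zero_mem' := fun k _ => map_zero _
  smul_mem' := fun c a ha k hk => by rw [map_smul, ha k hk, smul_zero]

theorem mem_KS (d : ι → Module.End C M) (S : Finset ι) (a : M) :
    a ∈ KS d S ↔ ∀ k ∈ S, d k a = 0 := Iff.rfl

variable [DecidableEq ι]

theorem mem_KS_insert (d : ι → Module.End C M) (S : Finset ι) (k : ι) (a : M) :
    a ∈ KS d (insert k S) ↔ a ∈ KS d S ∧ d k a = 0 := by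
  simp only [mem_KS, Finset.forall_mem_insert]; exact and_comm

theorem KS_P {p : ℕ} {P d : ι → Module.End C M} (w : WData p P d) {S : Finset ι} {k : ι}
    (hk : k ∉ S) (a : M) (ha : a ∈ KS d S) : P k a ∈ KS d S := by
  intro l hl
  rw [w.dP l k a (by rintro rfl; exact hk hl), ha l hl, map_zero]

theorem KS_d {p : ℕ} {P d : ι → Module.End C M} (w : WData p P d) {S : Finset ι} {k : ι}
    (a : M) (ha : a ∈ KS d S) : d k a ∈ KS d S := by
  intro l hl
  rw [w.dd l k a, ha l hl, map_zero]

theorem pow_stable {N : Submodule C M} {f : Module.End C M} (h : ∀ a ∈ N, f a ∈ N) (j : ℕ)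
    (a : M) (ha : a ∈ N) : (f ^ j) a ∈ N := by
  induction j generalizing a with
  | zero => simpa using ha
  | succ j ih => rw [pow_succ, Module.End.mul_apply]; exact ih _ (h _ ha)

theorem decomp {p : ℕ} (hp : p.Prime) {P d : ι → Module.End C M} (w : WData p P d)
    (S : Finset ι) : Nonempty (M ≃ₗ[C] (Fin (p ^ S.card) → KS d S)) := by
  induction S using Finset.induction_on with
  | empty =>
    have h : KS d ∅ = ⊤ := by ext a; simp [mem_KS]
    rw [h, Finset.card_empty, pow_zero]
    exact ⟨(Submodule.topEquiv.symm).trans (LinearEquiv.funUnique (Fin 1) C _).symm⟩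
  | insert k S hk ih =>
    obtain ⟨e⟩ := ih
    obtain ⟨f⟩ := one_var hp w.char (P k) (d k) (w.dPs k) (KS d S) (KS d (insert k S))
      (KS_P w hk) (KS_d w) (mem_KS_insert d S k) (w.nil k)
    rw [Finset.card_insert_of_notMem hk, pow_succ]
    exact ⟨e.trans ((LinearEquiv.piCongrRight fun _ => f).trans
      ((LinearEquiv.curry C _ _ _).symm.trans (LinearEquiv.funCongrLeft C _ finProdFinEquiv.symm)))⟩

theorem exists_proj {p : ℕ} (hp : p.Prime) {P d : ι → Module.End C M} (w : WData p P d)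
    (S : Finset ι) : ∃ T : Module.End C M, (∀ a, T a ∈ KS d S) ∧ ∀ a ∈ KS d S, T a = a := by
  induction S using Finset.induction_on with
  | empty => exact ⟨1, fun a => by simp [mem_KS], fun a _ => rfl⟩
  | insert k S hk ih =>
    obtain ⟨T, hT, hT'⟩ := ih
    obtain ⟨q, hq⟩ := fact_inv (M := M) hp w.char (p - 1) (by have := hp.pos; omega)
    refine ⟨q • ((d k ^ (p - 1)) * (P k ^ (p - 1)) * T), fun a => ?_, fun a ha => ?_⟩
    · rw [mem_KS_insert]
      refine ⟨?_, ?_⟩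
      · exact (KS d S).toAddSubgroup.zsmul_mem (pow_stable (KS_d w) _ _
          (pow_stable (KS_P w hk) _ _ (hT a))) _
      · rw [LinearMap.smul_apply, map_zsmul, mul_assoc, Module.End.mul_apply,
          ← Module.End.mul_apply, ← pow_succ', Nat.sub_add_cancel hp.pos, w.nil, smul_zero]
    · rw [mem_KS_insert] at ha
      rw [LinearMap.smul_apply, Module.End.mul_apply, Module.End.mul_apply, hT' a ha.1,
        dpow_Ppow _ _ (w.dPs k) _ _ ha.2, hq]

theorem KS_univ_of_stable [Fintype ι] {p : ℕ} (hp : p.Prime) {P d : ι → Module.End C M}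
    (w : WData p P d) (B : AddSubgroup M) (hB : ∀ k, ∀ a ∈ B, P k a ∈ B)
    (hK : ∀ a ∈ KS d Finset.univ, a ∈ B) (a : M) : a ∈ B := by
  have hB' : ∀ k j, ∀ a ∈ B, (P k ^ j) a ∈ B := by
    intro k j
    induction j with
    | zero => simp
    | succ j ih => intro a ha; rw [pow_succ, Module.End.mul_apply]; exact ih _ (hB _ _ ha)
  have key : ∀ T : Finset ι, ∀ a ∈ KS d Tᶜ, a ∈ B := by
    intro T
    induction T using Finset.induction_on with
    | empty => simpa using hK
    | insert k T hk ih =>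
      have hi : Tᶜ = insert k (insert k T)ᶜ := by
        ext x; by_cases hx : x = k <;> simp [hx, hk]
      have hk' : k ∉ (insert k T)ᶜ := by simp
      generalize (insert k T)ᶜ = U at hi hk'
      rw [hi] at ih
      have : ∀ m, m ≤ p → ∀ a ∈ KS d U, (d k ^ m) a = 0 → a ∈ B := by
        intro m
        induction m with
        | zero => intro _ a _ h; have : a = 0 := by simpa using h
                  rw [this]; exact B.zero_mem
        | succ m ihm =>
          intro hm a ha hda
          obtain ⟨q, hq⟩ := fact_inv (M := M) hp w.char m (by omega)
          have hb : q • (d k ^ m) a ∈ KS d (insert k U) := by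
            rw [mem_KS_insert]
            refine ⟨(KS d U).toAddSubgroup.zsmul_mem (pow_stable (KS_d w) _ _ ha) _, ?_⟩
            rw [map_zsmul, ← Module.End.mul_apply, ← pow_succ', hda, smul_zero]
          have hb2 := (mem_KS_insert _ _ _ _).1 hb
          have h1 : a - (P k ^ m) (q • (d k ^ m) a) ∈ B := by
            refine ihm (by omega) _ ((KS d U).sub_mem ha (pow_stable (KS_P w hk') _ _ hb2.1)) ?_
            rw [map_sub, dpow_Ppow _ _ (w.dPs k) m _ hb2.2, smul_comm, hq, sub_self]
          have := B.add_mem h1 (hB' k m _ (ih _ hb))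
          rwa [sub_add_cancel] at this
      exact fun a ha => this p le_rfl a ha (w.nil k a)
  exact key Finset.univ a (by simp [mem_KS])

theorem zero_of_stable [Fintype ι] {p : ℕ} {P d : ι → Module.End C M}
    (w : WData p P d) (I : Set M) (hI : ∀ k, ∀ a ∈ I, d k a ∈ I)
    (hK : ∀ a ∈ KS d Finset.univ, a ∈ I → a = 0) (a : M) (ha : a ∈ I) : a = 0 := by
  have key : ∀ T : Finset ι, ∀ a ∈ KS d Tᶜ, a ∈ I → a = 0 := by
    intro T
    induction T using Finset.induction_on with
    | empty => simpa using hK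
    | insert k T hk ih =>
      have hi : Tᶜ = insert k (insert k T)ᶜ := by
        ext x; by_cases hx : x = k <;> simp [hx, hk]
      generalize (insert k T)ᶜ = U at hi
      rw [hi] at ih
      have : ∀ m, ∀ a ∈ KS d U, a ∈ I → (d k ^ m) a = 0 → a = 0 := by
        intro m
        induction m with
        | zero => intro a _ _ h; simpa using h
        | succ m ihm =>
          intro a ha haI hda
          rw [pow_succ, Module.End.mul_apply] at hda
          have := ihm _ (KS_d w a ha) (hI k a haI) hda
          exact ih a ((mem_KS_insert _ _ _ _).2 ⟨ha, this⟩) haI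
      exact fun a ha haI => this p a ha haI (w.nil k a)
  exact key Finset.univ a (by simp [mem_KS]) ha

/-- Additive span of `C₀` under the operators `P k`, `k ∈ S`. -/
inductive Gen (P : ι → Module.End C M) (C₀ : AddSubgroup M) (S : Finset ι) : M → Prop
  | base (a : M) : a ∈ C₀ → Gen P C₀ S a
  | add (a b : M) : Gen P C₀ S a → Gen P C₀ S b → Gen P C₀ S (a + b)
  | app (k : ι) (a : M) : k ∈ S → Gen P C₀ S a → Gen P C₀ S (P k a)

theorem Gen.zsmul {P : ι → Module.End C M} {C₀ : AddSubgroup M} {S : Finset ι} (q : ℤ) {a : M}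
    (h : Gen P C₀ S a) : Gen P C₀ S (q • a) := by
  induction h with
  | base a ha => exact .base _ (C₀.zsmul_mem ha q)
  | add a b _ _ iha ihb => rw [smul_add]; exact .add _ _ iha ihb
  | app k a hk _ ih => rw [← map_zsmul]; exact .app _ _ hk ih

theorem Gen.d {p : ℕ} {P d : ι → Module.End C M} (w : WData p P d) {C₀ : AddSubgroup M}
    (hC : ∀ k, ∀ a ∈ C₀, d k a = 0) {S : Finset ι} (k : ι) {a : M}
    (h : Gen P C₀ S a) : Gen P C₀ S (d k a) := by
  induction h with
  | base a ha => rw [hC k a ha]; exact .base _ C₀.zero_mem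
  | add a b _ _ iha ihb => rw [map_add]; exact .add _ _ iha ihb
  | app l a hl h ih =>
    by_cases hkl : k = l
    · subst hkl; rw [w.dPs]; exact .add _ _ (.app _ _ hl ih) h
    · rw [w.dP _ _ _ hkl]; exact .app _ _ hl ih

theorem pow_comm_apply {f g : Module.End C M} (h : ∀ a, f (g a) = g (f a)) (j : ℕ) (a : M) :
    (f ^ j) (g a) = g ((f ^ j) a) := by
  induction j generalizing a with
  | zero => simp
  | succ j ih => rw [pow_succ, Module.End.mul_apply, Module.End.mul_apply, h, ih]

theorem Gen.drop {p : ℕ} (hp : p.Prime) {P d : ι → Module.End C M} (w : WData p P d)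
    {C₀ : AddSubgroup M} (hC : ∀ k, ∀ a ∈ C₀, d k a = 0)
    (hPp : ∀ k, ∀ a ∈ C₀, (P k ^ p) a ∈ C₀) {S : Finset ι} {k : ι} (hk : k ∉ S) {a : M}
    (h : Gen P C₀ (insert k S) a) (m : ℕ) :
    Gen P C₀ S ((d k ^ (p - 1)) ((P k ^ m) a)) := by
  induction h generalizing m with
  | base a ha =>
    apply Gen.base
    induction m using Nat.strong_induction_on generalizing a with
    | _ m ih =>
      rcases Nat.lt_or_ge m p with hm | hm
      · rcases Nat.lt_or_ge m (p - 1) with hm' | hm'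
        · rw [dpow_Ppow_lt _ _ (w.dPs k) _ _ _ (hC k a ha) hm']; exact C₀.zero_mem
        · have : m = p - 1 := by omega
          rw [this, dpow_Ppow _ _ (w.dPs k) _ _ (hC k a ha)]
          exact C₀.nsmul_mem ha _
      · obtain ⟨t, rfl⟩ := Nat.exists_eq_add_of_le' hm
        rw [pow_add, Module.End.mul_apply]
        exact ih t (by have := hp.pos; omega) _ (hPp k a ha)
  | add a b _ _ iha ihb => rw [map_add, map_add]; exact .add _ _ (iha m) (ihb m)
  | app l a hl h ih =>
    by_cases hkl : k = l
    · subst hkl; rw [← Module.End.mul_apply (P k ^ m), ← pow_succ]; exact ih _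
    · rw [pow_comm_apply (w.PP k l), pow_comm_apply (fun a => w.dP k l a hkl)]
      exact .app _ _ ((Finset.mem_insert.1 hl).resolve_left (Ne.symm hkl)) (ih m)

theorem Gen.mem {p : ℕ} (hp : p.Prime) {P d : ι → Module.End C M} (w : WData p P d)
    {C₀ : AddSubgroup M} (hC : ∀ k, ∀ a ∈ C₀, d k a = 0)
    (hPp : ∀ k, ∀ a ∈ C₀, (P k ^ p) a ∈ C₀) (S : Finset ι) (a : M)
    (h : Gen P C₀ S a) (ha : ∀ k, d k a = 0) : a ∈ C₀ := by
  induction S using Finset.induction_on with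
  | empty =>
    clear ha
    induction h with
    | base a ha => exact ha
    | add a b _ _ iha ihb => exact C₀.add_mem iha ihb
    | app k a hk => simp at hk
  | insert k S hk ih =>
    obtain ⟨q, hq⟩ := fact_inv (M := M) hp w.char (p - 1) (by have := hp.pos; omega)
    have := (Gen.drop hp w hC hPp hk h (p - 1)).zsmul q
    rw [dpow_Ppow _ _ (w.dPs k) _ _ (ha k), hq] at this
    exact ih this

/-- The rank argument. -/
theorem KS_le {ι' : Type*} [DecidableEq ι'] [Fintype ι] [Fintype ι'] {p : ℕ} (hp : p.Prime)
    {P d : ι → Module.End C M} {P' d' : ι' → Module.End C M} (hcard : Fintype.card ι = Fintype.card ι')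
    (w : WData p P d) (w' : WData p P' d') (e₀ : KS d Finset.univ ≃ₗ[C] C)
    (hle : KS d Finset.univ ≤ KS d' Finset.univ) : KS d' Finset.univ ≤ KS d Finset.univ := by
  obtain ⟨e⟩ := decomp hp w Finset.univ
  obtain ⟨e'⟩ := decomp hp w' Finset.univ
  obtain ⟨T, hT, hT'⟩ := exists_proj hp w Finset.univ
  have : Module.Finite C (KS d Finset.univ) := Module.Finite.equiv e₀.symm
  rw [Finset.card_univ] at e e'
  rw [← hcard] at e'
  let π : KS d' Finset.univ →ₗ[C] KS d Finset.univ :=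
    (T ∘ₗ (KS d' Finset.univ).subtype).codRestrict _ (fun a => hT a)
  let g : (Fin (p ^ Fintype.card ι) → KS d' Finset.univ) →ₗ[C]
      (Fin (p ^ Fintype.card ι) → KS d Finset.univ) := LinearMap.compLeft π _
  have hg : Function.Surjective g := by
    intro c
    refine ⟨fun i => ⟨c i, hle (c i).2⟩, ?_⟩
    funext i
    exact Subtype.ext (hT' _ (c i).2)
  have hs : Function.Surjective (g ∘ₗ e'.toLinearMap ∘ₗ e.symm.toLinearMap) :=
    hg.comp (e'.surjective.comp e.symm.surjective)
  have hi := OrzechProperty.injective_of_surjective_endomorphism _ hs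
  have hgi : Function.Injective g := by
    intro u v huv
    have := @hi (e (e'.symm u)) (e (e'.symm v)) (by simpa using huv)
    simpa using this
  intro z hz
  have hz' : T z ∈ KS d' Finset.univ := hle (hT z)
  have := @hgi (fun _ => ⟨z, hz⟩) (fun _ => ⟨T z, hz'⟩) (by
    funext i
    exact Subtype.ext (hT' _ (hT z)).symm)
  have h0 := congrArg Subtype.val (congrFun this ⟨0, pow_pos hp.pos _⟩)
  have h1 : z = T z := h0
  rw [h1]; exact hT z

end WeylAbstract

section WeylConcrete

variable {A : Type*} [Ring A] {n : ℕ}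

/-- Multiplication operators. -/
def opP (X D : Fin n → A) : Fin n ⊕ Fin n → Module.End (Subring.center A) A :=
  Sum.elim (fun i => LinearMap.mulLeft _ (X i)) (fun i => LinearMap.mulRight _ (D i))

/-- Commutator operators. -/
def opd (X D : Fin n → A) : Fin n ⊕ Fin n → Module.End (Subring.center A) A :=
  Sum.elim (fun i => LinearMap.mulLeft _ (D i) - LinearMap.mulRight _ (D i))
    (fun i => LinearMap.mulRight _ (X i) - LinearMap.mulLeft _ (X i))

theorem opP_inl (X D : Fin n → A) (i a) : opP X D (.inl i) a = X i * a := rfl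
theorem opP_inr (X D : Fin n → A) (i a) : opP X D (.inr i) a = a * D i := rfl
theorem opd_inl (X D : Fin n → A) (i a) : opd X D (.inl i) a = D i * a - a * D i := rfl
theorem opd_inr (X D : Fin n → A) (i a) : opd X D (.inr i) a = a * X i - X i * a := rfl

theorem ad_nil {p : ℕ} (hp : p.Prime) (hA : (p : A) = 0) (y : A) (hy : y ^ p ∈ Subring.center A)
    (a : A) : ((LinearMap.mulLeft (Subring.center A) y - LinearMap.mulRight (Subring.center A) y
      : Module.End (Subring.center A) A) ^ p) a = 0 ∧
    ((LinearMap.mulRight (Subring.center A) y - LinearMap.mulLeft (Subring.center A) y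
      : Module.End (Subring.center A) A) ^ p) a = 0 := by
  have hc : Commute (LinearMap.mulLeft (Subring.center A) y : Module.End (Subring.center A) A)
      (LinearMap.mulRight (Subring.center A) y) := by
    refine LinearMap.ext fun a => ?_
    simp [mul_assoc]
  have hE : ∀ f : Module.End (Subring.center A) A, (p : Module.End (Subring.center A) A) * f = 0 := by
    intro f
    refine LinearMap.ext fun a => ?_
    simp [← nsmul_eq_mul, LinearMap.smul_apply]
    rw [nsmul_eq_mul, hA, zero_mul]
  have hpow : (LinearMap.mulLeft (Subring.center A) y : Module.End (Subring.center A) A) ^ p =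
      (LinearMap.mulRight (Subring.center A) y) ^ p := by
    rw [LinearMap.pow_mulLeft, LinearMap.pow_mulRight]
    refine LinearMap.ext fun a => ?_
    simpa using ((Subring.mem_center_iff.1 hy) a).symm
  constructor
  · obtain ⟨r, hr⟩ := ((hc.sub_left (Commute.refl _))).exists_add_pow_prime_eq hp
    rw [sub_add_cancel, hpow, mul_assoc, mul_assoc, hE, add_zero] at hr
    have := add_eq_right.1 hr.symm
    rw [this]; rfl
  · obtain ⟨r, hr⟩ := ((hc.symm.sub_left (Commute.refl _))).exists_add_pow_prime_eq hp
    rw [sub_add_cancel, hpow, mul_assoc, mul_assoc, hE, add_zero] at hr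
    have := add_eq_right.1 hr.symm
    rw [this]; rfl

theorem wdata {p : ℕ} (hp : p.Prime) (hA : (p : A) = 0) (X D : Fin n → A)
    (hXX : ∀ i j, X i * X j = X j * X i) (hDD : ∀ i j, D i * D j = D j * D i)
    (hDX : ∀ i j, D i * X j = X j * D i + if i = j then 1 else 0)
    (hX : ∀ i, X i ^ p ∈ Subring.center A) (hD : ∀ i, D i ^ p ∈ Subring.center A) :
    WData p (opP X D) (opd X D) where
  PP := by
    rintro (i | i) (j | j) a <;> simp only [opP_inl, opP_inr]
    · rw [← mul_assoc, hXX, mul_assoc]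
    · rw [mul_assoc]
    · rw [mul_assoc]
    · rw [mul_assoc, hDD, mul_assoc]
  dd := by
    rintro (i | i) (j | j) a <;> simp only [opd_inl, opd_inr, mul_sub, sub_mul]
    · have e1 : D i * (D j * a) = D j * (D i * a) := by rw [← mul_assoc, hDD i j, mul_assoc]
      have e2 : a * D j * D i = a * D i * D j := by rw [mul_assoc, hDD j i, mul_assoc]
      rw [e1, e2]; simp only [mul_assoc]; abel
    · have e1 : D i * (X j * a) = X j * (D i * a) + (if i = j then 1 else 0) * a := by
        rw [← mul_assoc, hDX i j, add_mul, mul_assoc]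
      have e2 : a * D i * X j = a * X j * D i + (if i = j then 1 else 0) * a := by
        rw [mul_assoc, hDX i j, mul_add, mul_assoc]; split_ifs <;> simp
      rw [e1, e2]; simp only [mul_assoc]; abel
    · have e1 : D j * (X i * a) = X i * (D j * a) + (if j = i then 1 else 0) * a := by
        rw [← mul_assoc, hDX j i, add_mul, mul_assoc]
      have e2 : a * D j * X i = a * X i * D j + (if j = i then 1 else 0) * a := by
        rw [mul_assoc, hDX j i, mul_add, mul_assoc]; split_ifs <;> simp
      rw [e1, e2]; simp only [mul_assoc]; abel
    · have e1 : X i * (X j * a) = X j * (X i * a) := by rw [← mul_assoc, hXX i j, mul_assoc]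
      have e2 : a * X j * X i = a * X i * X j := by rw [mul_assoc, hXX j i, mul_assoc]
      rw [e1, e2]; simp only [mul_assoc]; abel
  dP := by
    rintro (i | i) (j | j) a h <;> simp only [opd_inl, opd_inr, opP_inl, opP_inr, mul_sub, sub_mul]
    · have : i ≠ j := fun h' => h (by rw [h'])
      rw [← mul_assoc, hDX, if_neg this, add_zero]; simp only [mul_assoc]
    · rw [mul_assoc a, hDD j i]; simp only [mul_assoc]
    · rw [← mul_assoc (X i), hXX i j]; simp only [mul_assoc]
    · have : j ≠ i := fun h' => h (by rw [h'])
      rw [mul_assoc a, hDX, if_neg this, add_zero]; simp only [mul_assoc]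
  dPs := by
    rintro (i | i) a <;> simp only [opd_inl, opd_inr, opP_inl, opP_inr, mul_sub, sub_mul]
    · rw [← mul_assoc, hDX, if_pos rfl, add_mul, one_mul]; simp only [mul_assoc]; abel
    · rw [mul_assoc a, hDX, if_pos rfl, mul_add, mul_one]; simp only [mul_assoc]; abel
  nil := by
    rintro (i | i) a
    · exact (ad_nil hp hA (D i) (hD i) a).1
    · exact (ad_nil hp hA (X i) (hX i) a).2
  char := fun a => by rw [nsmul_eq_mul, hA, zero_mul]

theorem mem_KS_op (X D : Fin n → A) (a : A) : a ∈ KS (opd X D) Finset.univ ↔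
    (∀ i, X i * a = a * X i) ∧ ∀ i, D i * a = a * D i := by
  simp only [mem_KS, Finset.mem_univ, true_imp_iff, Sum.forall, opd_inl, opd_inr, sub_eq_zero]
  exact ⟨fun h => ⟨fun i => (h.2 i).symm, h.1⟩, fun h => ⟨h.2, fun i => (h.1 i).symm⟩⟩

/-- `[D, X] = 1` implies `D X^m = X^m D + m X^{m-1}`; in characteristic `p`, `X^p` is central. -/
theorem comm_pow {p : ℕ} (hp : p.Prime) (hA : (p : A) = 0) (X D : A) (c : A)
    (hcX : Commute c X) (h : D * X = X * D + c) : D * X ^ p = X ^ p * D := by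
  have key : ∀ m : ℕ, D * X ^ (m + 1) = X ^ (m + 1) * D + (m + 1 : ℕ) * (c * X ^ m) := by
    intro m
    induction m with
    | zero => simpa using h
    | succ m ih =>
      have e : X ^ (m + 1) * c = c * X ^ (m + 1) := (hcX.pow_right _).eq.symm
      rw [pow_succ X (m + 1), ← mul_assoc, ih, add_mul, mul_assoc (X ^ (m + 1)) D X, h, mul_add, e,
        mul_assoc _ (c * X ^ m) X, mul_assoc c, ← pow_succ X m, ← mul_assoc,
        Nat.cast_succ (m + 1), add_mul, one_mul]
      abel
  obtain ⟨m, rfl⟩ := Nat.exists_eq_succ_of_ne_zero hp.ne_zero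
  rw [Nat.succ_eq_add_one] at *
  rw [key, hA, zero_mul, add_zero]

theorem comm_pow' {p : ℕ} (hp : p.Prime) (hA : (p : A) = 0) (X D : A) (c : A)
    (hcD : Commute c D) (h : D * X = X * D + c) : X * D ^ p = D ^ p * X :=
  comm_pow hp hA D X (-c) hcD.neg_left (by rw [h]; simp)

end WeylConcrete

section WeylFinal

variable (R : Type*) [CommRing R] {n : ℕ}

theorem wXX (i j : Fin n) : wX R i * wX R j = wX R j * wX R i := by
  simp only [wX, ← map_mul]; exact RingQuot.mkAlgHom_rel R (WeylRel.xx i j)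

theorem wDD (i j : Fin n) : wD R i * wD R j = wD R j * wD R i := by
  simp only [wD, ← map_mul]; exact RingQuot.mkAlgHom_rel R (WeylRel.dd i j)

theorem wDX (i j : Fin n) : wD R i * wX R j = wX R j * wD R i + if i = j then 1 else 0 := by
  have := RingQuot.mkAlgHom_rel R (WeylRel.dx (R := R) i j)
  rw [map_add, map_mul, map_mul] at this
  unfold wX wD
  rw [this]
  split_ifs <;> simp

theorem weyl_ind {motive : WeylAlgebra R n → Prop}
    (hr : ∀ r, motive (algebraMap R _ r)) (hx : ∀ i, motive (wX R i)) (hd : ∀ i, motive (wD R i))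
    (hmul : ∀ a b, motive a → motive b → motive (a * b))
    (hadd : ∀ a b, motive a → motive b → motive (a + b)) (a : WeylAlgebra R n) : motive a := by
  obtain ⟨f, rfl⟩ := RingQuot.mkAlgHom_surjective R (WeylRel R n) a
  induction f using FreeAlgebra.induction with
  | grade0 r => rw [AlgHom.commutes]; exact hr r
  | grade1 x => rcases x with i | i
                · exact hx i
                · exact hd i
  | mul a b ha hb => rw [map_mul]; exact hmul _ _ ha hb
  | add a b ha hb => rw [map_add]; exact hadd _ _ ha hb

theorem commute_map_of_gen (φ : WeylAlgebra R n →ₐ[R] WeylAlgebra R n) (z : WeylAlgebra R n)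
    (hx : ∀ i, φ (wX R i) * z = z * φ (wX R i)) (hd : ∀ i, φ (wD R i) * z = z * φ (wD R i))
    (a : WeylAlgebra R n) : φ a * z = z * φ a := by
  induction a using weyl_ind R with
  | hr r => rw [AlgHom.commutes]; exact Algebra.commutes r z
  | hx i => exact hx i
  | hd i => exact hd i
  | hmul a b ha hb => rw [map_mul, mul_assoc, hb, ← mul_assoc, ha, mul_assoc]
  | hadd a b ha hb => rw [map_add, add_mul, mul_add, ha, hb]

theorem mem_center_of_gen (z : WeylAlgebra R n)
    (hx : ∀ i, wX R i * z = z * wX R i) (hd : ∀ i, wD R i * z = z * wD R i) :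
    z ∈ Subring.center (WeylAlgebra R n) := by
  rw [Subring.mem_center_iff]
  exact commute_map_of_gen R (AlgHom.id R _) z hx hd

theorem weyl_char (p : ℕ) [CharP R p] : (p : WeylAlgebra R n) = 0 := by
  rw [← map_natCast (algebraMap R (WeylAlgebra R n)), CharP.cast_eq_zero, map_zero]

theorem wXp_center {p : ℕ} (hp : p.Prime) [CharP R p] (i : Fin n) :
    wX R i ^ p ∈ Subring.center (WeylAlgebra R n) := by
  refine mem_center_of_gen R _ (fun j => ?_) (fun j => ?_)
  · exact (Commute.pow_right (wXX R j i) p).eq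
  · refine comm_pow hp (weyl_char R p) _ _ _ ?_ (wDX R j i)
    split_ifs
    · exact Commute.one_left _
    · exact Commute.zero_left _

theorem wDp_center {p : ℕ} (hp : p.Prime) [CharP R p] (i : Fin n) :
    wD R i ^ p ∈ Subring.center (WeylAlgebra R n) := by
  refine mem_center_of_gen R _ (fun j => ?_) (fun j => ?_)
  · refine comm_pow' hp (weyl_char R p) _ _ _ ?_ (wDX R i j)
    split_ifs
    · exact Commute.one_left _
    · exact Commute.zero_left _
  · exact (Commute.pow_right (wDD R j i) p).eq

theorem adjoin_le_center {p : ℕ} (hp : p.Prime) [CharP R p] (a : WeylAlgebra R n)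
    (ha : a ∈ Algebra.adjoin R (pPowSet R n p)) : a ∈ Subring.center (WeylAlgebra R n) := by
  have : Algebra.adjoin R (pPowSet R n p) ≤ Subalgebra.center R (WeylAlgebra R n) := by
    rw [Algebra.adjoin_le_iff]
    rintro _ (⟨i, rfl⟩ | ⟨i, rfl⟩)
    · exact wXp_center R hp i
    · exact wDp_center R hp i
  exact this ha

theorem wdata_id {p : ℕ} (hp : p.Prime) [CharP R p] :
    WData p (opP (wX R (n := n)) (wD R)) (opd (wX R) (wD R)) :=
  wdata hp (weyl_char R p) _ _ (wXX R) (wDD R) (wDX R) (wXp_center R hp) (wDp_center R hp)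

theorem center_iff {p : ℕ} (hp : p.Prime) [CharP R p] (a : WeylAlgebra R n) :
    a ∈ Algebra.adjoin R (pPowSet R n p) ↔ a ∈ Subring.center (WeylAlgebra R n) := by
  refine ⟨adjoin_le_center R hp a, fun ha => ?_⟩
  let C₀ : AddSubgroup (WeylAlgebra R n) :=
    (Algebra.adjoin R (pPowSet R n p)).toSubring.toAddSubgroup
  have hmem : ∀ b, b ∈ C₀ ↔ b ∈ Algebra.adjoin R (pPowSet R n p) := fun b => Iff.rfl
  have w := wdata_id R (n := n) hp
  have hC' : ∀ b ∈ Subring.center (WeylAlgebra R n),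
      ∀ k, opd (wX R) (wD R) k b = 0 := by
    intro b hb k
    exact (mem_KS_op (wX R) (wD R) b).2 ⟨fun i => (Subring.mem_center_iff.1 hb) _,
      fun i => (Subring.mem_center_iff.1 hb) _⟩ k (Finset.mem_univ _)
  have hC : ∀ k, ∀ b ∈ C₀, opd (wX R) (wD R) k b = 0 :=
    fun k b hb => hC' b (adjoin_le_center R hp b hb) k
  have hX : ∀ i, wX R i ^ p ∈ Algebra.adjoin R (pPowSet R n p) :=
    fun i => Algebra.subset_adjoin (Or.inl ⟨i, rfl⟩)
  have hD : ∀ i, wD R i ^ p ∈ Algebra.adjoin R (pPowSet R n p) :=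
    fun i => Algebra.subset_adjoin (Or.inr ⟨i, rfl⟩)
  have hPp : ∀ k, ∀ b ∈ C₀, (opP (wX R) (wD R) k ^ p) b ∈ C₀ := by
    rintro (i | i) b hb
    · change ((LinearMap.mulLeft _ (wX R i)) ^ p) b ∈ C₀
      rw [LinearMap.pow_mulLeft]
      exact Subalgebra.mul_mem _ (hX i) hb
    · change ((LinearMap.mulRight _ (wD R i)) ^ p) b ∈ C₀
      rw [LinearMap.pow_mulRight]
      exact Subalgebra.mul_mem _ hb (hD i)
  refine Gen.mem hp w hC hPp Finset.univ a ?_ (hC' a ha)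
  have key : ∀ c b, Gen (opP (wX R) (wD R)) C₀ Finset.univ b →
      Gen (opP (wX R) (wD R)) C₀ Finset.univ (c * b) := by
    intro c
    induction c using weyl_ind R with
    | hr r =>
      intro b hb
      induction hb with
      | base b hb =>
        exact .base _ (Subalgebra.mul_mem _ (Subalgebra.algebraMap_mem _ r) hb)
      | add a b _ _ iha ihb => rw [mul_add]; exact .add _ _ iha ihb
      | app k b hk h ih =>
        have : algebraMap R _ r * opP (wX R) (wD R) k b =
            opP (wX R) (wD R) k (algebraMap R _ r * b) := by
          rcases k with i | i
          · simp only [opP_inl]; rw [← mul_assoc, Algebra.commutes, mul_assoc]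
          · simp only [opP_inr]; rw [mul_assoc]
        rw [this]; exact .app _ _ hk ih
    | hx i => intro b hb; exact .app (.inl i) b (Finset.mem_univ _) hb
    | hd i =>
      intro b hb
      have h1 := (hb.d w hC (.inl i)).add _ _ (Gen.app (.inr i) b (Finset.mem_univ _) hb)
      rw [opd_inl, opP_inr, sub_add_cancel] at h1
      exact h1
    | hmul c d hc hd => intro b hb; rw [mul_assoc]; exact hc _ (hd _ hb)
    | hadd c d hc hd => intro b hb; rw [add_mul]; exact .add _ _ (hc _ hb) (hd _ hb)
  have := key a 1 (.base _ (Subalgebra.one_mem _))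
  rwa [mul_one] at this

end WeylFinal

/-- Let `R` be a commutative ring of prime characteristic `p`, `A = A_n(R)`
the `n`-th Weyl algebra and `C = R[x_1^p, …, x_n^p, ∂_1^p, …, ∂_n^p]` its center.  An
`R`-algebra homomorphism `φ : A → A` is an isomorphism if and only if its restriction
`φ|_C : C → C` (which makes sense since `φ(C) ⊆ C`) is an isomorphism. -/
theorem weylAlgebra_endomorphism_iso_iff_center_restriction_iso (R : Type*) [CommRing R]
    (n p : ℕ) (hp : p.Prime) [CharP R p]
    (φ : WeylAlgebra R n →ₐ[R] WeylAlgebra R n)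
    (hmap : ∀ a ∈ Algebra.adjoin R (pPowSet R n p), φ a ∈ Algebra.adjoin R (pPowSet R n p)) :
    Function.Bijective φ ↔
      Function.Bijective (fun c : Algebra.adjoin R (pPowSet R n p) =>
        (⟨φ c, hmap c c.2⟩ : Algebra.adjoin R (pPowSet R n p))) := by
  constructor
  · rintro ⟨hi, hs⟩
    refine ⟨fun a b hab => Subtype.ext (hi (congrArg Subtype.val hab)), ?_⟩
    rintro ⟨c, hc⟩
    obtain ⟨a, rfl⟩ := hs c
    refine ⟨⟨a, ?_⟩, rfl⟩
    rw [center_iff R hp, Subring.mem_center_iff] at hc ⊢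
    intro g
    apply hi
    rw [map_mul, map_mul, hc]
  · rintro ⟨hi, hs⟩
    have w := wdata_id R (n := n) hp
    have hK : ∀ a, a ∈ KS (opd (wX R (n := n)) (wD R)) Finset.univ ↔
        a ∈ Subring.center (WeylAlgebra R n) := by
      intro a
      rw [mem_KS_op]
      exact ⟨fun h => mem_center_of_gen R a h.1 h.2, fun h =>
        ⟨fun i => (Subring.mem_center_iff.1 h) _, fun i => (Subring.mem_center_iff.1 h) _⟩⟩
    constructor
    · rw [injective_iff_map_eq_zero]
      intro a ha
      refine zero_of_stable w {a | φ a = 0} ?_ ?_ a ha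
      · rintro (i | i) b (hb : φ b = 0)
        · change φ (opd _ _ _ _) = 0
          rw [opd_inl, map_sub, map_mul, map_mul, hb]; simp
        · change φ (opd _ _ _ _) = 0
          rw [opd_inr, map_sub, map_mul, map_mul, hb]; simp
      · intro b hb (hb0 : φ b = 0)
        rw [hK, ← center_iff R hp] at hb
        have := @hi ⟨b, hb⟩ 0 (Subtype.ext (by simpa using hb0))
        exact congrArg Subtype.val this
    · have w' : WData p (opP (fun i => φ (wX R i)) (fun i => φ (wD R i)))
          (opd (fun i => φ (wX R i)) (fun i => φ (wD R i))) := by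
        refine wdata hp (weyl_char R p) _ _ ?_ ?_ ?_ ?_ ?_
        · intro i j; rw [← map_mul, wXX, map_mul]
        · intro i j; rw [← map_mul, wDD, map_mul]
        · intro i j; rw [← map_mul, wDX, map_add, map_mul]; split_ifs <;> simp
        · intro i; rw [← map_pow]
          exact adjoin_le_center R hp _ (hmap _ (Algebra.subset_adjoin (Or.inl ⟨i, rfl⟩)))
        · intro i; rw [← map_pow]
          exact adjoin_le_center R hp _ (hmap _ (Algebra.subset_adjoin (Or.inr ⟨i, rfl⟩)))
      let e₀ : KS (opd (wX R (n := n)) (wD R)) Finset.univ ≃ₗ[Subring.center (WeylAlgebra R n)]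
          Subring.center (WeylAlgebra R n) :=
        { toFun := fun a => ⟨a, (hK _).1 a.2⟩
          invFun := fun a => ⟨a, (hK _).2 a.2⟩
          map_add' := fun _ _ => rfl
          map_smul' := fun _ _ => rfl
          left_inv := fun _ => rfl
          right_inv := fun _ => rfl }
      have hle := KS_le hp rfl w w' e₀ (fun a ha => by
        rw [hK, Subring.mem_center_iff] at ha
        rw [mem_KS_op]
        exact ⟨fun i => ha _, fun i => ha _⟩)
      intro a
      refine KS_univ_of_stable hp w' (φ.toRingHom.range.toAddSubgroup) ?_ ?_ a
      · rintro (i | i) _ ⟨b, rfl⟩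
        · exact ⟨wX R i * b, map_mul φ _ _⟩
        · exact ⟨b * wD R i, map_mul φ _ _⟩
      · intro b hb
        have := hle hb
        rw [hK, ← center_iff R hp] at this
        obtain ⟨c, hc⟩ := hs ⟨b, this⟩
        exact ⟨c, congrArg Subtype.val hc⟩
end

section
/- Let R be a commutative ring of prime characteristic p, A = A_n(R) the n-th Weyl algebra over R, C = R[x_1^p, …, x_n^p, ∂_1^p, …, ∂_n^p] its center, and φ: A → A an R-algebra homomorphism. Consider the A-bimodule ₍φ₎A₍φ₎, i.e. A with bimodule multiplication x·s·y = φ(x) s φ(y). Then: (a) ₍φ₎A₍φ₎ is C-linear, i.e. r·m = m·r for all r ∈ C; (b) the set of bimodule invariants {m ∈ ₍φ₎A₍φ₎ : a·m = m·a for all a ∈ A} equals C (viewed as a left C-module via φ); and (c) ₍φ₎A₍φ₎ is a finitely generated A-bimodule (equivalently, finitely generated module over A ⊗_C A^{op}) if and only if A's center C is a finitely generated module over its subring φ(C), i.e. φ|_C is finite. -/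
namespace WeylAux

/-- The ordered monomial `u_0^{α_0} ⋯ u_{m-1}^{α_{m-1}}`. -/
def mon {A : Type*} [Ring A] {p : ℕ} : {m : ℕ} → (Fin m → A) → (Fin m → Fin p) → A
  | 0, _, _ => 1
  | _ + 1, u, α => u 0 ^ (α 0 : ℕ) * mon (Fin.tail u) (Fin.tail α)

theorem mon_succ {A : Type*} [Ring A] {p m : ℕ} (u : Fin (m + 1) → A) (α : Fin (m + 1) → Fin p) :
    mon u α = u 0 ^ (α 0 : ℕ) * mon (Fin.tail u) (Fin.tail α) := rfl

theorem mon_cons {A : Type*} [Ring A] {p m : ℕ} (u : Fin (m + 1) → A) (a : Fin p)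
    (β : Fin m → Fin p) :
    mon u (Fin.cons a β : Fin (m + 1) → Fin p) = u 0 ^ (a : ℕ) * mon (Fin.tail u) β := by
  rw [mon_succ]; simp

theorem mon_zero {A : Type*} [Ring A] {p m : ℕ} [NeZero p] (u : Fin m → A) :
    mon u (fun _ => (0 : Fin p)) = 1 := by
  induction m with
  | zero => rfl
  | succ m ih =>
    rw [mon_succ]
    have := ih (Fin.tail u)
    rw [Fin.val_zero, pow_zero, one_mul]
    exact this

theorem commute_mon {A : Type*} [Ring A] {p m : ℕ} (u : Fin m → A) (α : Fin m → Fin p) (q : A)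
    (h : ∀ i, Commute q (u i)) : Commute q (mon u α) := by
  induction m with
  | zero => exact Commute.one_right _
  | succ m ih =>
    rw [mon_succ]
    exact ((h 0).pow_right _).mul_right (ih _ _ fun i => h i.succ)

theorem map_mon {R A : Type*} [CommRing R] [Ring A] [Algebra R A] {p m : ℕ} (φ : A →ₐ[R] A)
    (u : Fin m → A) (α : Fin m → Fin p) :
    φ (mon u α) = mon (fun i => φ (u i)) α := by
  induction m with
  | zero => exact map_one φ
  | succ m ih =>
    rw [mon_succ, mon_succ, map_mul, map_pow, ih]; rfl

theorem comm_pow {A : Type*} [Ring A] (w u e : A) (he : ∀ a, Commute e a)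
    (h : w * u = u * w + e) (a : ℕ) :
    w * u ^ (a + 1) = u ^ (a + 1) * w + ((a + 1 : ℕ) : A) * (e * u ^ a) := by
  induction a with
  | zero => simp [h]
  | succ a ih =>
    rw [pow_succ u (a + 1), ← mul_assoc, ih, add_mul, mul_assoc _ w u, h, mul_add,
      ← (he (u ^ (a + 1))).eq, Nat.cast_succ (a + 1), add_mul _ (1 : A), one_mul, mul_assoc _ _ u,
      mul_assoc e _ u, ← pow_succ, mul_assoc _ u w]
    abel

theorem comm_pow_p {A : Type*} [Ring A] {p : ℕ} (hp : p.Prime) (hp0 : (p : A) = 0)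
    (w u e : A) (he : ∀ a, Commute e a)
    (h : w * u = u * w + e) : Commute w (u ^ p) := by
  have := comm_pow w u e he h (p - 1)
  rw [Nat.sub_add_cancel hp.one_le, hp0, zero_mul, add_zero] at this
  exact this

theorem cancel_nat {A : Type*} [Ring A] {p : ℕ} (hp : p.Prime) (hp0 : (p : A) = 0)
    (a : ℕ) (h0 : 0 < a) (ha : a < p) (s : A) (h : (a : A) * s = 0) : s = 0 := by
  have hc : Nat.Coprime a p := (Nat.Coprime.symm ((Nat.Prime.coprime_iff_not_dvd hp).mpr (Nat.not_dvd_of_pos_of_lt h0 ha)))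
  obtain ⟨k, -, hk⟩ := Nat.exists_mul_mod_eq_one_of_coprime hc hp.one_lt
  have h2 : ((a * k : ℕ) : A) = 1 := by
    rw [← Nat.div_add_mod (a * k) p, hk]
    push_cast
    rw [hp0]; simp
  calc s = ((a * k : ℕ) : A) * s := by rw [h2, one_mul]
    _ = (k : A) * ((a : A) * s) := by push_cast; rw [← mul_assoc, Nat.cast_comm]
    _ = 0 := by rw [h, mul_zero]

theorem indep_one {A : Type*} [Ring A] {p : ℕ} (hp : p.Prime) (hp0 : (p : A) = 0)
    (w u : A) (h : w * u = u * w + 1) (N : ℕ) (hN : N ≤ p) (s : Fin N → A)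
    (hs : ∀ a, Commute w (s a)) (h0 : ∑ a : Fin N, u ^ (a : ℕ) * s a = 0) : ∀ a, s a = 0 := by
  induction N with
  | zero => exact fun a => a.elim0
  | succ N ih =>
    have key : ∑ a : Fin N, u ^ (a : ℕ) * (((a + 1 : ℕ) : A) * s a.succ) = 0 := by
      have e1 : w * (∑ a : Fin (N + 1), u ^ (a : ℕ) * s a) -
          (∑ a : Fin (N + 1), u ^ (a : ℕ) * s a) * w = 0 := by rw [h0]; simp
      rw [Fin.sum_univ_succ] at e1
      simp only [Fin.val_zero, pow_zero, one_mul, mul_add, add_mul, (hs 0).eq,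
        add_sub_add_left_eq_sub, Finset.mul_sum, Finset.sum_mul, ← Finset.sum_sub_distrib] at e1
      rw [← e1]
      refine Finset.sum_congr rfl fun a _ => ?_
      have e2 := comm_pow w u 1 (fun a => Commute.one_left a) h (a : ℕ)
      rw [Fin.val_succ, ← mul_assoc w, e2, mul_assoc _ (s a.succ) w, ← (hs a.succ).eq]
      rw [one_mul, add_mul, mul_assoc _ w, add_sub_cancel_left, ← mul_assoc, ← Nat.cast_comm]
    have h1 := ih (by omega) (fun a => ((a + 1 : ℕ) : A) * s a.succ)
      (fun a => (Nat.commute_cast _ _).mul_right (hs _)) key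
    have h2 : ∀ a : Fin N, s a.succ = 0 := fun a =>
      cancel_nat hp hp0 (a + 1) (by omega) (by omega) _ (h1 a)
    intro a
    refine Fin.cases ?_ h2 a
    rw [Fin.sum_univ_succ] at h0
    simpa [h2] using h0

theorem indep {A : Type*} [Ring A] {p : ℕ} (hp : p.Prime) (hp0 : (p : A) = 0)
    (m : ℕ) (u w : Fin m → A)
    (h : ∀ k j, w k * u j = u j * w k + if k = j then 1 else 0)
    (c : (Fin m → Fin p) → A) (hc : ∀ α a, Commute (c α) a)
    (h0 : ∑ α, c α * mon u α = 0) : ∀ α, c α = 0 := by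
  induction m with
  | zero =>
    intro α
    have : ∀ β, β = α := fun β => Subsingleton.elim _ _
    rw [Fintype.sum_eq_single α (fun x hx => (hx (this x)).elim)] at h0
    simpa [mon] using h0
  | succ m ih =>
    rw [← (Fin.consEquiv fun _ => Fin p).sum_comp, Fintype.sum_prod_type] at h0
    have e : ∀ (a : Fin p), ∑ β : Fin m → Fin p, c (Fin.consEquiv (fun _ => Fin p) (a, β)) *
        mon u (Fin.consEquiv (fun _ => Fin p) (a, β)) = u 0 ^ (a : ℕ) *
        ∑ β : Fin m → Fin p, c (Fin.cons a β) * mon (Fin.tail u) β := by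
      intro a
      rw [Finset.mul_sum]
      refine Finset.sum_congr rfl fun β _ => ?_
      show c (Fin.cons a β) * mon u (Fin.cons a β : Fin (m + 1) → Fin p) = _
      rw [mon_cons, ← mul_assoc, (hc _ _).eq, mul_assoc]
    simp only [e] at h0
    have h1 := indep_one hp hp0 (w 0) (u 0) (by simpa using h 0 0) p le_rfl _ (fun a => ?_) h0
    · intro α
      have h2 := ih (Fin.tail u) (Fin.tail w) (fun k j => by
        have := h k.succ j.succ
        simpa [Fin.tail] using this) (fun β => c (Fin.cons (α 0) β)) (fun β => hc _) (h1 (α 0))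
        (Fin.tail α)
      simpa using h2
    · refine Commute.sum_right _ _ _ fun β _ => (hc _ _).symm.mul_right (commute_mon _ _ _ ?_)
      intro i
      have := h 0 i.succ
      rw [if_neg (Fin.succ_ne_zero i).symm, add_zero] at this
      exact this

/-- Left multiplication by a generator preserves the span of the ordered monomials. -/
theorem span_closed {R A : Type*} [CommRing R] [Ring A] [Algebra R A] {p : ℕ} [NeZero p]
    (S : Subalgebra R A) (hS : ∀ c ∈ S, ∀ a, Commute c a) (m : ℕ) (u : Fin m → A)
    (hup : ∀ i, u i ^ p ∈ S) (huu : ∀ i j, ∃ e ∈ S, u i * u j = u j * u i + e) :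
    ∀ j, ∀ t ∈ Submodule.span S (Set.range (mon (p := p) u)),
      u j * t ∈ Submodule.span S (Set.range (mon (p := p) u)) := by
  have hsm : ∀ (c : S) (a b : A), a * (c • b) = c • (a * b) := by
    intro c a b
    rw [Subalgebra.smul_def, Subalgebra.smul_def, smul_eq_mul, smul_eq_mul, ← mul_assoc,
      ← (hS c c.2 a).eq, mul_assoc]
  induction m with
  | zero => exact fun j => j.elim0
  | succ m ih =>
    have claim : ∀ (a : ℕ), ∀ t ∈ Submodule.span S (Set.range (mon (p := p) (Fin.tail u))),
        u 0 ^ a * t ∈ Submodule.span S (Set.range (mon (p := p) u)) := by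
      intro a t ht
      induction ht using Submodule.span_induction with
      | mem x hx =>
        obtain ⟨β, rfl⟩ := hx
        have hlt : a % p < p := Nat.mod_lt _ (NeZero.pos p)
        have : u 0 ^ a * mon (Fin.tail u) β = (⟨(u 0 ^ p) ^ (a / p), S.pow_mem (hup 0) _⟩ : S) •
            mon u (Fin.cons (⟨a % p, hlt⟩ : Fin p) β : Fin (m + 1) → Fin p) := by
          have h9 : (u 0 ^ p) ^ (a / p) * u 0 ^ (a % p) = u 0 ^ a := by
            rw [← pow_mul, ← pow_add, Nat.div_add_mod]
          rw [mon_cons, Subalgebra.smul_def, smul_eq_mul, ← mul_assoc, ← h9]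
        rw [this]
        exact Submodule.smul_mem _ _ (Submodule.subset_span ⟨_, rfl⟩)
      | zero => simp
      | add x y _ _ hx hy => rw [mul_add]; exact Submodule.add_mem _ hx hy
      | smul c x _ hx => rw [hsm]; exact Submodule.smul_mem _ _ hx
    intro j t ht
    induction ht using Submodule.span_induction with
    | mem x hx =>
      obtain ⟨α, rfl⟩ := hx
      rw [mon_succ]
      have hmem : mon (Fin.tail u) (Fin.tail α) ∈
        Submodule.span S (Set.range (mon (p := p) (Fin.tail u))) :=
          Submodule.subset_span ⟨_, rfl⟩
      refine Fin.cases ?_ (fun j => ?_) j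
      · rw [← mul_assoc, ← pow_succ']
        exact claim _ _ hmem
      · have h1 := ih (Fin.tail u) (fun i => hup i.succ) (fun i j => huu i.succ j.succ) j _ hmem
        rcases Nat.eq_zero_or_pos (α 0 : ℕ) with h0 | h0
        · rw [h0, pow_zero, one_mul]
          simpa [Fin.tail] using claim 0 _ h1
        · obtain ⟨e, he, hee⟩ := huu j.succ 0
          have h2 := comm_pow _ _ e (hS e he) hee ((α 0 : ℕ) - 1)
          rw [Nat.sub_add_cancel h0] at h2
          rw [← mul_assoc, h2, add_mul]
          refine Submodule.add_mem _ ?_ ?_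
          · rw [mul_assoc]; exact claim _ _ h1
          · have h3 : ((α 0 : ℕ) : A) * (e * u 0 ^ ((α 0 : ℕ) - 1)) *
                mon (Fin.tail u) (Fin.tail α) =
                (⟨((α 0 : ℕ) : A) * e, S.mul_mem (natCast_mem S _) he⟩ : S) •
                (u 0 ^ ((α 0 : ℕ) - 1) * mon (Fin.tail u) (Fin.tail α)) := by
              rw [Subalgebra.smul_def, smul_eq_mul]; simp only [mul_assoc]
            rw [h3]
            exact Submodule.smul_mem _ _ (claim _ _ hmem)
    | zero => simp
    | add x y _ _ hx hy => rw [mul_add]; exact Submodule.add_mem _ hx hy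
    | smul c x _ hx => rw [hsm]; exact Submodule.smul_mem _ _ hx

theorem span_top {R A : Type*} [CommRing R] [Ring A] [Algebra R A] {p : ℕ} [NeZero p]
    (S : Subalgebra R A) (hS : ∀ c ∈ S, ∀ a, Commute c a) (m : ℕ) (u : Fin m → A)
    (hup : ∀ i, u i ^ p ∈ S) (huu : ∀ i j, ∃ e ∈ S, u i * u j = u j * u i + e)
    (hgen : Algebra.adjoin R (Set.range u) = ⊤) :
    Submodule.span S (Set.range (mon (p := p) u)) = ⊤ := by
  set M := Submodule.span S (Set.range (mon (p := p) u)) with hM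
  have h1 : (1 : A) ∈ M := by
    rw [← mon_zero (p := p) u]
    exact Submodule.subset_span ⟨_, rfl⟩
  have key : ∀ a : A, ∀ t ∈ M, a * t ∈ M := by
    intro a
    have ha : a ∈ Algebra.adjoin R (Set.range u) := by rw [hgen]; trivial
    induction ha using Algebra.adjoin_induction with
    | mem x hx =>
      obtain ⟨j, rfl⟩ := hx
      exact span_closed S hS m u hup huu j
    | algebraMap r =>
      intro t ht
      exact M.smul_mem (⟨algebraMap R A r, S.algebraMap_mem r⟩ : S) ht
    | add x y _ _ hx hy => intro t ht; rw [add_mul]; exact M.add_mem (hx t ht) (hy t ht)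
    | mul x y _ _ hx hy => intro t ht; rw [mul_assoc]; exact hx _ (hy t ht)
  rw [eq_top_iff]
  intro a _
  simpa using key a 1 h1

/-- On a finite free module, an endomorphism vanishing on the image of an injective endomorphism
is zero. -/
theorem comp_inj_zero {Z M ι : Type*} [CommRing Z] [AddCommGroup M] [Module Z M] [Fintype ι]
    [DecidableEq ι]
    (b : Module.Basis ι Z M) (f g : M →ₗ[Z] M) (hf : Function.Injective f) (h : g ∘ₗ f = 0) :
    g = 0 := by
  have hl : IsLeftRegular (LinearMap.toMatrixAlgEquiv b f) := by
    intro X Y hXY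
    have h1 : f * (LinearMap.toMatrixAlgEquiv b).symm X =
        f * (LinearMap.toMatrixAlgEquiv b).symm Y := by
      apply (LinearMap.toMatrixAlgEquiv b).injective
      simpa using hXY
    apply (LinearMap.toMatrixAlgEquiv b).symm.injective
    ext v
    exact hf (LinearMap.congr_fun h1 v)
  have hr := Matrix.isLeftRegular_iff_isRightRegular.mp hl
  apply (LinearMap.toMatrixAlgEquiv b).injective
  apply hr
  show LinearMap.toMatrixAlgEquiv b g * LinearMap.toMatrixAlgEquiv b f =
    LinearMap.toMatrixAlgEquiv b 0 * LinearMap.toMatrixAlgEquiv b f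
  rw [← map_mul, ← map_mul, zero_mul]
  exact congrArg _ h

theorem abstract_main {R A : Type*} [CommRing R] [Ring A] [Algebra R A] {p : ℕ}
    (hp : p.Prime) (hp0 : (p : A) = 0) (m : ℕ) (u w : Fin m → A)
    (hgen : Algebra.adjoin R (Set.range u) = ⊤)
    (huu : ∀ i j, ∃ e : R, u i * u j = u j * u i + algebraMap R A e)
    (hw : ∀ k j, w k * u j = u j * w k + if k = j then 1 else 0)
    (C : Subalgebra R A) (hC : C = Algebra.adjoin R (Set.range fun i => u i ^ p))
    (φ : A →ₐ[R] A) :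
    (∀ r ∈ C, ∀ a : A, φ r * a = a * φ r)
    ∧
    {a : A | ∀ b : A, φ b * a = a * φ b} = (C : Set A)
    ∧
    ((∃ s : Finset A,
        AddSubgroup.closure {x : A | ∃ g ∈ s, ∃ a b : A, x = φ a * g * φ b} = ⊤)
      ↔
      (∃ t : Finset A, (∀ g ∈ t, g ∈ C) ∧
        ∀ c ∈ C, c ∈ AddSubgroup.closure {x : A | ∃ g ∈ t, ∃ a ∈ C, x = φ a * g})) := by
  classical
  have : NeZero p := ⟨hp.ne_zero⟩
  -- elements commuting with generators are central
  have hcent : ∀ q : A, (∀ i, Commute q (u i)) → ∀ a, Commute q a := by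
    intro q hq a
    have ha : a ∈ Algebra.adjoin R (Set.range u) := by rw [hgen]; trivial
    induction ha using Algebra.adjoin_induction with
    | mem x hx => obtain ⟨j, rfl⟩ := hx; exact hq j
    | algebraMap r => exact (Algebra.commutes r q).symm
    | add x y _ _ hx hy => exact hx.add_right hy
    | mul x y _ _ hx hy => exact hx.mul_right hy
  have hupc : ∀ i a, Commute (u i ^ p) a := by
    intro i
    refine hcent _ fun j => ?_
    obtain ⟨e, he⟩ := huu j i
    exact (comm_pow_p hp hp0 _ _ _ (Algebra.commutes e) he).symm
  have hCc : ∀ c ∈ C, ∀ a, Commute c a := by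
    intro c hc a
    rw [hC] at hc
    induction hc using Algebra.adjoin_induction with
    | mem x hx => obtain ⟨j, rfl⟩ := hx; exact hupc j a
    | algebraMap r => exact Algebra.commutes r a
    | add x y _ _ hx hy => exact hx.add_left hy
    | mul x y _ _ hx hy => exact hx.mul_left hy
  have hupC : ∀ i, u i ^ p ∈ C := by
    intro i; rw [hC]; exact Algebra.subset_adjoin ⟨i, rfl⟩
  have hspan := span_top C hCc m u hupC
    (fun i j => by
      obtain ⟨e, he⟩ := huu i j
      exact ⟨_, C.algebraMap_mem e, he⟩) hgen
  -- every element is a combination of monomials with coefficients in C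
  have hexp : ∀ a : A, ∃ c : (Fin m → Fin p) → A, (∀ α, c α ∈ C) ∧ ∑ α, c α * mon u α = a := by
    intro a
    have ha : a ∈ Submodule.span C (Set.range (mon (p := p) u)) := by rw [hspan]; trivial
    obtain ⟨c, hc⟩ := (Submodule.mem_span_range_iff_exists_fun _).mp ha
    exact ⟨fun α => c α, fun α => (c α).2, hc⟩
  -- the center is C
  have hcenC : ∀ z : A, (∀ a, Commute z a) → z ∈ C := by
    intro z hz
    obtain ⟨c, hc, hcz⟩ := hexp z
    have h1 := indep hp hp0 m u w hw (fun α => c α - if α = (fun _ => 0) then z else 0)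
      (fun α a => by
        refine Commute.sub_left (hCc _ (hc α) a) ?_
        split_ifs
        · exact hz a
        · exact Commute.zero_left a)
      (by
        simp only [sub_mul, Finset.sum_sub_distrib, hcz, ite_mul, zero_mul]
        rw [Finset.sum_ite_eq' Finset.univ (fun _ => (0 : Fin p))]
        simp [mon_zero]) (fun _ => 0)
    simp only [if_true, sub_eq_zero] at h1
    rw [← h1]; exact hc _
  -- the basis over the center
  let Z := Subalgebra.center R A
  have hZc : ∀ (z : Z) (a : A), Commute (z : A) a := fun z a =>
    ((Subalgebra.mem_center_iff.mp z.2) a).symm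
  have hli : ∀ (y v : Fin m → A), (∀ k j, v k * y j = y j * v k + if k = j then 1 else 0) →
      LinearIndependent Z (mon (p := p) y) := by
    intro y v hv
    rw [Fintype.linearIndependent_iff]
    intro g hg α
    exact Subtype.ext (indep hp hp0 m y v hv (fun α => (g α : A)) (fun α a => hZc _ _) hg α)
  have hspZ : ⊤ ≤ Submodule.span Z (Set.range (mon (p := p) u)) := by
    intro a _
    obtain ⟨c, hc, hca⟩ := hexp a
    rw [Submodule.mem_span_range_iff_exists_fun]
    exact ⟨fun α => ⟨c α, Subalgebra.mem_center_iff.mpr fun b => (hCc _ (hc α) b).symm.eq⟩, hca⟩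
  let b : Module.Basis (Fin m → Fin p) Z A := Module.Basis.mk (hli u w hw) hspZ
  have hb : ∀ α, b α = mon u α := fun α => by simp [b]
  let y : Fin m → A := fun i => φ (u i)
  have hy : ∀ k j, φ (w k) * y j = y j * φ (w k) + if k = j then 1 else 0 := by
    intro k j
    rw [← map_mul, hw, map_add, map_mul]
    split_ifs <;> simp [y]
  -- double centralizer
  have hdc : ∀ q : A, (∀ i, Commute q (y i)) → ∀ a, Commute q a := by
    intro q hq
    let f : A →ₗ[Z] A := b.constr Z (mon (p := p) y)
    have hf : Function.Injective f := by
      have := hli y _ hy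
      have h3 : LinearIndependent Z (f ∘ b) := by
        convert this using 1
        ext α
        simp [f]
      exact LinearMap.ker_eq_bot.mp (by
        rw [LinearMap.ker_eq_bot']
        intro x hx
        rw [← b.sum_repr x, map_sum] at hx
        simp only [map_smul] at hx
        have h4 := Fintype.linearIndependent_iff.mp h3 _ hx
        rw [← b.sum_repr x]
        simp [h4])
    let g : A →ₗ[Z] A :=
      { toFun := fun a => q * a - a * q
        map_add' := fun a c => by noncomm_ring
        map_smul' := fun z a => by
          simp only [Subalgebra.smul_def, smul_eq_mul, RingHom.id_apply]
          rw [← mul_assoc, ← (hZc z q).eq, mul_sub, mul_assoc, mul_assoc] }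
    have hg : g = 0 := by
      refine comp_inj_zero b f g hf (b.ext fun α => ?_)
      have : f (b α) = mon y α := by simp [f]
      show g (f (b α)) = 0
      rw [this]
      exact sub_eq_zero.mpr (commute_mon y α q hq).eq
    intro a
    exact sub_eq_zero.mp (LinearMap.congr_fun hg a)
  have hφC : ∀ r ∈ C, ∀ a : A, Commute (φ r) a := fun r hr =>
    hdc _ fun i => (hCc r hr (u i)).map φ
  have hφCC : ∀ r ∈ C, φ r ∈ C := fun r hr => hcenC _ (hφC r hr)
  refine ⟨fun r hr a => hφC r hr a, ?_, ?_, ?_⟩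
  · ext q
    constructor
    · intro h
      exact hcenC _ (hdc q fun i => (h (u i)).symm)
    · intro h a
      exact (hCc q h _).symm
  · rintro ⟨s, hs⟩
    let T : Finset A := Finset.image (fun x : A × (Fin m → Fin p) × (Fin m → Fin p) =>
      φ (mon u x.2.1) * x.1 * φ (mon u x.2.2)) (s ×ˢ Finset.univ)
    let π : A → A := fun a => (b.repr a (fun _ => 0) : Z)
    have hπadd : ∀ a c, π (a + c) = π a + π c := by intro a c; simp [π]
    have hπneg : ∀ a, π (-a) = - π a := by intro a; simp [π]
    have hπ0 : π 0 = 0 := by simp [π]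
    have hπz : ∀ z ∈ C, ∀ a, π (z * a) = z * π a := by
      intro z hz a
      have : z * a = (⟨z, Subalgebra.mem_center_iff.mpr fun b => (hCc _ hz b).symm.eq⟩ : Z) • a :=
        rfl
      simp only [π, this, map_smul]
      rfl
    have hπ1 : π 1 = 1 := by
      have : (1 : A) = b (fun _ => 0) := by rw [hb, mon_zero]
      simp only [π]
      rw [this, b.repr_self]
      simp [hb, mon_zero]
    have hπC : ∀ a, π a ∈ C := fun a => hcenC _ fun c => hZc _ c
    refine ⟨T.image π, ?_, ?_⟩
    · intro g hg
      obtain ⟨x, _, rfl⟩ := Finset.mem_image.mp hg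
      exact hπC x
    · have hall : ∀ x : A, x ∈ AddSubgroup.closure {x : A | ∃ g ∈ T, ∃ a ∈ C, x = φ a * g} := by
        intro x
        have hx : x ∈ AddSubgroup.closure {x : A | ∃ g ∈ s, ∃ a b : A, x = φ a * g * φ b} := by
          rw [hs]; trivial
        refine (AddSubgroup.closure_le _).mpr ?_ hx
        rintro _ ⟨g, hg, a, d, rfl⟩
        obtain ⟨c, hc, rfl⟩ := hexp a
        obtain ⟨c', hc', rfl⟩ := hexp d
        simp only [map_sum, map_mul, Finset.sum_mul, Finset.mul_sum]
        refine AddSubgroup.sum_mem _ fun α _ => AddSubgroup.sum_mem _ fun β _ => ?_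
        refine AddSubgroup.subset_closure ⟨φ (mon u β) * g * φ (mon u α), ?_, c β * c' α,
          C.mul_mem (hc β) (hc' α), ?_⟩
        · exact Finset.mem_image.mpr ⟨(g, β, α), by simp [hg], rfl⟩
        · rw [map_mul, ← mul_assoc _ (φ (c' α)), ← (hφC _ (hc' α) _).eq,
            (hφC _ (hc β) (φ (c' α))).eq]
          simp only [mul_assoc]
      intro c hc
      have h5 : ∀ x ∈ AddSubgroup.closure {x : A | ∃ g ∈ T, ∃ a ∈ C, x = φ a * g},
          π x ∈ AddSubgroup.closure {x : A | ∃ g ∈ T.image π, ∃ a ∈ C, x = φ a * g} := by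
        intro x hx
        induction hx using AddSubgroup.closure_induction with
        | mem x hx =>
          obtain ⟨g, hg, a, ha, rfl⟩ := hx
          rw [hπz _ (hφCC a ha)]
          exact AddSubgroup.subset_closure ⟨_, Finset.mem_image_of_mem _ hg, a, ha, rfl⟩
        | zero => rw [hπ0]; exact zero_mem _
        | add x y _ _ hx hy => rw [hπadd]; exact add_mem hx hy
        | neg x _ hx => rw [hπneg]; exact neg_mem hx
      have h6 := h5 c (hall c)
      have h7 : π c = c := by
        have := hπz c hc 1
        rwa [mul_one, hπ1, mul_one] at this
      rwa [h7] at h6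
  · rintro ⟨t, ht, hct⟩
    refine ⟨Finset.image (fun x : A × (Fin m → Fin p) => x.1 * mon u x.2) (t ×ˢ Finset.univ), ?_⟩
    rw [eq_top_iff]
    intro a _
    obtain ⟨c, hc, rfl⟩ := hexp a
    refine AddSubgroup.sum_mem _ fun α _ => ?_
    have h8 := hct _ (hc α)
    generalize c α = z at h8
    induction h8 using AddSubgroup.closure_induction with
    | mem x hx =>
      obtain ⟨g, hg, a, ha, rfl⟩ := hx
      refine AddSubgroup.subset_closure ⟨g * mon u α,
        Finset.mem_image.mpr ⟨(g, α), by simp [hg], rfl⟩, a, 1, ?_⟩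
      rw [map_one, mul_one, mul_assoc]
    | zero => rw [zero_mul]; exact zero_mem _
    | add x y _ _ hx hy => rw [add_mul]; exact add_mem hx hy
    | neg x _ hx => rw [neg_mul]; exact neg_mem hx

theorem abstract_main_pair {R A : Type*} [CommRing R] [Ring A] [Algebra R A] {p : ℕ}
    (hp : p.Prime) (hp0 : (p : A) = 0) (n : ℕ) (x d : Fin n → A)
    (rxx : ∀ i j, x i * x j = x j * x i) (rdd : ∀ i j, d i * d j = d j * d i)
    (rdx : ∀ i j, d i * x j = x j * d i + if i = j then 1 else 0)
    (hgen : Algebra.adjoin R (Set.range (Sum.elim x d)) = ⊤)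
    (C : Subalgebra R A) (hC : C = Algebra.adjoin R
      ((Set.range fun i => x i ^ p) ∪ (Set.range fun i => d i ^ p)))
    (φ : A →ₐ[R] A) :
    (∀ r ∈ C, ∀ a : A, φ r * a = a * φ r)
    ∧
    {a : A | ∀ b : A, φ b * a = a * φ b} = (C : Set A)
    ∧
    ((∃ s : Finset A,
        AddSubgroup.closure {x : A | ∃ g ∈ s, ∃ a b : A, x = φ a * g * φ b} = ⊤)
      ↔
      (∃ t : Finset A, (∀ g ∈ t, g ∈ C) ∧
        ∀ c ∈ C, c ∈ AddSubgroup.closure {x : A | ∃ g ∈ t, ∃ a ∈ C, x = φ a * g})) := by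
  let e := (finSumFinEquiv (m := n) (n := n)).symm
  let U : Fin n ⊕ Fin n → A := Sum.elim (fun i => x i) (fun i => d i)
  let W : Fin n ⊕ Fin n → A := Sum.elim (fun i => d i) (fun i => - x i)
  have hUU : ∀ i j, ∃ r : R, U i * U j = U j * U i + algebraMap R _ r := by
    rintro (i | i) (j | j)
    · exact ⟨0, by simp [U, rxx i j]⟩
    · exact ⟨if j = i then -1 else 0, by
        simp only [U, Sum.elim_inl, Sum.elim_inr, rdx]
        split_ifs <;> simp⟩
    · exact ⟨if i = j then 1 else 0, by
        simp only [U, Sum.elim_inl, Sum.elim_inr, rdx]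
        split_ifs <;> simp⟩
    · exact ⟨0, by simp [U, rdd i j]⟩
  have hWU : ∀ k j, W k * U j = U j * W k + if k = j then 1 else 0 := by
    rintro (i | i) (j | j)
    · simp only [U, W, Sum.elim_inl, rdx, Sum.inl.injEq]
    · simp [U, W, rdd i j]
    · simp [U, W, rxx i j]
    · simp only [U, W, Sum.elim_inr, Sum.inr.injEq, mul_neg, rdx, neg_mul]
      by_cases h : i = j
      · subst h; simp
      · simp [h, Ne.symm h]
  have hran : Set.range (fun k => U (e k)) = Set.range U := e.surjective.range_comp U
  refine abstract_main hp hp0 (n + n) (fun k => U (e k)) (fun k => W (e k)) (hran ▸ hgen)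
    (fun i j => hUU _ _) (fun k j => by simpa using hWU (e k) (e j)) C ?_ φ
  rw [hC]
  congr 1
  have h2 : Set.range (fun k => U (e k) ^ p) = Set.range (fun k => U k ^ p) :=
    e.surjective.range_comp (fun k => U k ^ p)
  rw [h2]
  ext x
  simp [U]

end WeylAux

/-- Let `R` be a commutative ring of prime characteristic `p`, `A = A_n(R)`
the `n`-th Weyl algebra, `C = R[x_1^p, …, x_n^p, ∂_1^p, …, ∂_n^p]` its center and
`φ : A → A` an `R`-algebra homomorphism.  Consider the `A`-bimodule `₍φ₎A₍φ₎`, i.e. `A` with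
bimodule multiplication `x·s·y = φ(x) s φ(y)`.  Then:
(a) `₍φ₎A₍φ₎` is `C`-linear, i.e. `r·m = m·r` for all `r ∈ C`;
(b) the set of bimodule invariants `{m : a·m = m·a for all a ∈ A}` equals `C`;
(c) `₍φ₎A₍φ₎` is a finitely generated `A`-bimodule (i.e. finitely many elements `g` generate
    it under sums of elements `φ(a) g φ(b)`) if and only if `C` is a finitely generated
    module over its subring `φ(C)`, i.e. `φ|_C` is finite. -/
theorem weylAlgebra_twisted_bimodule_properties (R : Type*) [CommRing R] (n p : ℕ)
    (hp : p.Prime) [CharP R p]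
    (φ : WeylAlgebra R n →ₐ[R] WeylAlgebra R n) :
    (∀ r ∈ Algebra.adjoin R (pPowSet R n p), ∀ m : WeylAlgebra R n, φ r * m = m * φ r)
    ∧
    {m : WeylAlgebra R n | ∀ a : WeylAlgebra R n, φ a * m = m * φ a}
      = (Algebra.adjoin R (pPowSet R n p) : Set (WeylAlgebra R n))
    ∧
    ((∃ s : Finset (WeylAlgebra R n),
        AddSubgroup.closure {x : WeylAlgebra R n |
          ∃ g ∈ s, ∃ a b : WeylAlgebra R n, x = φ a * g * φ b} = ⊤)
      ↔
      (∃ t : Finset (WeylAlgebra R n), (∀ g ∈ t, g ∈ Algebra.adjoin R (pPowSet R n p)) ∧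
        ∀ c ∈ Algebra.adjoin R (pPowSet R n p),
          c ∈ AddSubgroup.closure {x : WeylAlgebra R n |
            ∃ g ∈ t, ∃ a ∈ Algebra.adjoin R (pPowSet R n p), x = φ a * g})) := by
  have rxx : ∀ i j : Fin n, wX R i * wX R j = wX R j * wX R i := fun i j => by
    simpa [wX] using RingQuot.mkAlgHom_rel R (WeylRel.xx (R := R) i j)
  have rdd : ∀ i j : Fin n, wD R i * wD R j = wD R j * wD R i := fun i j => by
    simpa [wD] using RingQuot.mkAlgHom_rel R (WeylRel.dd (R := R) i j)
  have rdx : ∀ i j : Fin n, wD R i * wX R j = wX R j * wD R i + if i = j then 1 else 0 :=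
    fun i j => by
      have := RingQuot.mkAlgHom_rel R (WeylRel.dx (R := R) i j)
      rw [map_add, map_mul, map_mul] at this
      rw [wD, wX, this]
      split_ifs <;> simp
  have hp0 : ((p : ℕ) : WeylAlgebra R n) = 0 := by
    rw [← map_natCast (algebraMap R (WeylAlgebra R n)), CharP.cast_eq_zero, map_zero]
  have hgen : Algebra.adjoin R (Set.range (Sum.elim (fun i : Fin n => wX R i)
      (fun i : Fin n => wD R i))) = ⊤ := by
    have h1 : Set.range (Sum.elim (fun i : Fin n => wX R i) (fun i : Fin n => wD R i)) =
        RingQuot.mkAlgHom R (WeylRel R n) '' Set.range (FreeAlgebra.ι R) := by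
      rw [← Set.range_comp]
      congr 1
      ext (i | i) <;> rfl
    rw [h1, ← AlgHom.map_adjoin, FreeAlgebra.adjoin_range_ι, Algebra.map_top,
      AlgHom.range_eq_top]
    exact RingQuot.mkAlgHom_surjective R _
  exact WeylAux.abstract_main_pair hp hp0 n (fun i => wX R i) (fun i => wD R i) rxx rdd rdx hgen
    _ rfl φ
end
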